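/- arXiv:1107.4378 — 3 statements merged into one kernel-verified Lean document; each statement's English description precedes it below -/
import Mathlib

section
/- Fix a constant ε > 0. There exist a constant α > 0 and a threshold m₀ (both depending only on ε) such that for all integers m ≥ m₀ and n ≥ 1 with (1+ε)·n ≤ m, every vertex v of the random cuckoo graph with n edges on parts of size m, and every natural number j with 1 ≤ j ≤ m^{1/6}, Pr(B_v ≥ j+1) ≤ m^{−1−α·j}. -/
open Classical

/-- Adjacency: item `x` gives an edge from left vertex `h₀ x` to right vertex `h₁ x`. -/
def cuckooAdj (n m : ℕ) (h₀ h₁ : Fin n → Fin m) (a b : Fin m ⊕ Fin m) : Prop :=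
  ∃ x : Fin n, a = Sum.inl (h₀ x) ∧ b = Sum.inr (h₁ x)

/-- Connectivity in the cuckoo graph: equivalence generated by adjacency. -/
def cuckooConn (n m : ℕ) (h₀ h₁ : Fin n → Fin m) : (Fin m ⊕ Fin m) → (Fin m ⊕ Fin m) → Prop :=
  Relation.EqvGen (cuckooAdj n m h₀ h₁)

/-- `C(v)`: number of edges (items, with multiplicity) in the component of `v`. -/
noncomputable def cuckooC (n m : ℕ) (h₀ h₁ : Fin n → Fin m) (v : Fin m ⊕ Fin m) : ℕ :=
  Nat.card {x : Fin n // cuckooConn n m h₀ h₁ (Sum.inl (h₀ x)) v}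

/-- `V(v)`: number of vertices in the component of `v`. -/
noncomputable def cuckooV (n m : ℕ) (h₀ h₁ : Fin n → Fin m) (v : Fin m ⊕ Fin m) : ℕ :=
  Nat.card {u : Fin m ⊕ Fin m // cuckooConn n m h₀ h₁ u v}

/-- `B_v`: cyclotomic number of the component of `v`, `C(v) − V(v) + 1`. -/
noncomputable def cuckooB (n m : ℕ) (h₀ h₁ : Fin n → Fin m) (v : Fin m ⊕ Fin m) : ℕ :=
  cuckooC n m h₀ h₁ v + 1 - cuckooV n m h₀ h₁ v

/-- The sample space: a pair of hash functions chosen uniformly at random. -/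
abbrev HashPair (n m : ℕ) := (Fin n → Fin m) × (Fin n → Fin m)

/-- Probability of an event under uniformly random hash functions. -/
noncomputable def cuckooPr (n m : ℕ) (E : HashPair n m → Prop) : ℝ :=
  (Nat.card {ω : HashPair n m // E ω} : ℝ) / (Nat.card (HashPair n m) : ℝ)

/-- Expectation of a real random variable under uniformly random hash functions. -/
noncomputable def cuckooE (n m : ℕ) (f : HashPair n m → ℝ) : ℝ :=
  (∑ ω : HashPair n m, f ω) / (Nat.card (HashPair n m) : ℝ)

/-- `X_i`: number of vertices lying in components with exactly `i` edges. -/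
noncomputable def cuckooX (n m : ℕ) (h₀ h₁ : Fin n → Fin m) (i : ℕ) : ℕ :=
  Nat.card {v : Fin m ⊕ Fin m // cuckooC n m h₀ h₁ v = i}

/-- The setoid of connected components. -/
def cuckooSetoid (n m : ℕ) (h₀ h₁ : Fin n → Fin m) : Setoid (Fin m ⊕ Fin m) :=
  ⟨cuckooConn n m h₀ h₁, Relation.EqvGen.is_equivalence _⟩

/-- `ē(G) = ∑_H max(e(H),0)`, the total excess over all components
(`ℕ`-subtraction realizes the `max` with `0`). -/
noncomputable def cuckooEbar (n m : ℕ) (h₀ h₁ : Fin n → Fin m) : ℕ :=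
  ∑ᶠ c : Quotient (cuckooSetoid n m h₀ h₁),
    (Nat.card {x : Fin n // Quotient.mk (cuckooSetoid n m h₀ h₁) (Sum.inl (h₀ x)) = c}
      - Nat.card {u : Fin m ⊕ Fin m // Quotient.mk (cuckooSetoid n m h₀ h₁) u = c})

/-!
Deleting a vertex other than `v` that lies on exactly one edge, together with that edge, keeps the
component of `v` connected and does not change its excess. Once no such vertex is left, a walk from
`v` along new edges that reaches a new vertex can always be continued, so it can only end by
closing an ear; it can then restart from a visited vertex that still has an unused edge. Hence
`B_v ≥ j + 1` forces such a walk to close `j + 1` ears.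

By a union bound over the walks, reaching a new vertex costs a factor `n / m < 1`, and closing an
ear when `k` vertices have been visited, together with the choice of the vertex where the walk
resumes, costs a factor `k ^ 2 * n / m ^ 2`. The resulting recursion for `r` ears has the
supersolution `(A * (k + M) ^ 2) ^ r` with `A` of order `1 / m` and `M` of order `j`, whence
`Pr(B_v ≥ j + 1) ≤ (Q * (j + 1) ^ 2 / m) ^ (j + 1)`.
-/

section Multigraph

variable {V ι : Type*} {f : ι → Sym2 V} {v : V}

/-- The vertex set `K` and the edge set `S` form a subgraph, containing the vertex `v`, of the
multigraph in which the edge `x : ι` has the endpoints `f x`. -/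
structure IsRootedSubgraph (f : ι → Sym2 V) (v : V) (K : Finset V) (S : Finset ι) : Prop where
  root_mem : v ∈ K
  mem_of_mem_edge : ∀ x ∈ S, ∀ u ∈ f x, u ∈ K

/-- A connected subgraph containing `v`. Connectedness is expressed by cuts: some edge of the
subgraph leaves every proper vertex subset that contains `v`. -/
structure IsConnectedSubgraph (f : ι → Sym2 V) (v : V) (P : Finset V) (E : Finset ι) : Prop
    extends IsRootedSubgraph f v P E where
  exists_crossing : ∀ K ⊂ P, v ∈ K → ∃ x ∈ E, ∃ u ∈ K, ∃ w ∉ K, f x = s(u, w)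

/-- No vertex except possibly the root `v` is an endpoint of exactly one edge in `E`; thus
a walk arriving at a new vertex can leave it along another edge. -/
def HasNoPendant (f : ι → Sym2 V) (v : V) (E : Finset ι) : Prop :=
  ∀ x ∈ E, ∀ p ∈ f x, p ≠ v → ∃ y ∈ E, y ≠ x ∧ p ∈ f y

/-- `ClosesEars f r K u S`: a walk standing at `u`, which has visited the vertices in `K` and
traversed the edges in `S`, can close `r` ears. Every step traverses a new edge; it either reaches
a new vertex, or it closes an ear by hitting a visited vertex, after which the walk resumes at an
arbitrary visited vertex. -/
inductive ClosesEars [DecidableEq V] [DecidableEq ι] (f : ι → Sym2 V) :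
    ℕ → Finset V → V → Finset ι → Prop
  | done {K u S} : ClosesEars f 0 K u S
  | extend {r K u S x w} (hx : x ∉ S) (hw : w ∉ K) (hf : f x = s(u, w))
      (h : ClosesEars f r (insert w K) w (insert x S)) : ClosesEars f r K u S
  | close {r K u S x w u'} (hx : x ∉ S) (hw : w ∈ K) (hf : f x = s(u, w)) (hu' : u' ∈ K)
      (h : ClosesEars f r K u' (insert x S)) : ClosesEars f (r + 1) K u S

variable {K P : Finset V} {S E : Finset ι}

namespace IsConnectedSubgraph

lemma exists_unused_edge (h : IsConnectedSubgraph f v P E)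
    (hKS : IsRootedSubgraph f v K S) (hK : K ⊆ P) (hcard : S.card < E.card) :
    ∃ u ∈ K, ∃ x ∈ E, x ∉ S ∧ u ∈ f x := by
  obtain rfl | hKP := hK.eq_or_ssubset
  · obtain ⟨x, hx, hxS⟩ := Finset.exists_mem_notMem_of_card_lt_card hcard
    have hmem := Sym2.out_fst_mem (f x)
    exact ⟨_, h.mem_of_mem_edge x hx _ hmem, x, hx, hxS, hmem⟩
  · obtain ⟨x, hx, u, hu, w, hw, hf⟩ := h.exists_crossing K hKP hKS.root_mem
    refine ⟨u, hu, x, hx, fun hxS => hw (hKS.mem_of_mem_edge x hxS w ?_), ?_⟩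
    · rw [hf]; exact Sym2.mem_mk_right u w
    · rw [hf]; exact Sym2.mem_mk_left u w

lemma exists_crossing_ne_pendant [DecidableEq V] (h : IsConnectedSubgraph f v P E) {x : ι}
    {u p : V} (hf : f x = s(u, p)) (hunique : ∀ y ∈ E, p ∈ f y → y = x) (hv : v ∈ K) (hu : u ∈ K)
    (hK : insert p K ⊂ P) : ∃ y ∈ E, y ≠ x ∧ ∃ a ∈ K, ∃ b ∉ K, f y = s(a, b) := by
  obtain ⟨y, hy, a, ha, b, hb, hfy⟩ := h.exists_crossing _ hK (Finset.mem_insert_of_mem hv)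
  rw [Finset.mem_insert, not_or] at hb
  have hyx : y ≠ x := by
    rintro rfl
    rcases Sym2.eq_iff.1 (hf.symm.trans hfy) with ⟨-, hpb⟩ | ⟨hub, -⟩
    · exact hb.1 hpb.symm
    · exact hb.2 (hub ▸ hu)
  have hap : a ≠ p := by
    rintro rfl
    exact hyx (hunique y hy (hfy ▸ Sym2.mem_mk_left a b))
  exact ⟨y, hy, hyx, a, Finset.mem_of_mem_insert_of_ne ha hap, b, hb.2, hfy⟩

lemma erase_pendant [DecidableEq V] [DecidableEq ι] (h : IsConnectedSubgraph f v P E) {x : ι}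
    {p : V} (hp : p ∈ f x) (hpv : p ≠ v) (hunique : ∀ y ∈ E, p ∈ f y → y = x) :
    IsConnectedSubgraph f v (P.erase p) (E.erase x) where
  root_mem := Finset.mem_erase.2 ⟨hpv.symm, h.root_mem⟩
  mem_of_mem_edge y hy u hu := by
    obtain ⟨hyx, hyE⟩ := Finset.mem_erase.1 hy
    refine Finset.mem_erase.2 ⟨?_, h.mem_of_mem_edge y hyE u hu⟩
    rintro rfl
    exact hyx (hunique y hyE hu)
  exists_crossing K hK hv := by
    have hpK : p ∉ K := fun hmem => Finset.notMem_erase p P (hK.subset hmem)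
    obtain ⟨y, hy, u, hu, w, hw, hf⟩ :=
      h.exists_crossing K (hK.trans_subset (Finset.erase_subset p P)) hv
    by_cases hyx : y = x
    · subst hyx
      obtain rfl : p = w := by
        rw [hf, Sym2.mem_iff] at hp
        exact hp.resolve_left fun hpu => hpK (hpu ▸ hu)
      have hinsert : insert p K ⊂ P := by
        have hpP := h.mem_of_mem_edge y hy p hp
        have hsub := Finset.insert_subset hpP (hK.subset.trans (Finset.erase_subset p P))
        refine hsub.ssubset_of_ne ?_
        rintro rfl
        exact hK.ne (Finset.erase_insert hpK).symm
      obtain ⟨z, hz, hzy, hcross⟩ := h.exists_crossing_ne_pendant hf hunique hv hu hinsert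
      exact ⟨z, Finset.mem_erase.2 ⟨hzy, hz⟩, hcross⟩
    · exact ⟨y, Finset.mem_erase.2 ⟨hyx, hy⟩, u, hu, w, hw, hf⟩

lemma exists_hasNoPendant (h : IsConnectedSubgraph f v P E) {j : ℕ} (hj : P.card + j ≤ E.card) :
    ∃ P' E', IsConnectedSubgraph f v P' E' ∧ HasNoPendant f v E' ∧ P'.card + j ≤ E'.card := by
  classical
  induction E using Finset.strongInduction generalizing P with
  | H E ih =>
    by_cases hE : HasNoPendant f v E
    · exact ⟨P, E, h, hE, hj⟩
    · simp only [HasNoPendant] at hE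
      push Not at hE
      obtain ⟨x, hx, p, hp, hpv, hunique⟩ := hE
      refine ih (E.erase x) (Finset.erase_ssubset hx)
        (h.erase_pendant hp hpv fun y hy hpy => by_contra fun hyx => hunique y hy hyx hpy) ?_
      have hcardP := Finset.card_erase_add_one (h.mem_of_mem_edge x hx p hp)
      have hcardE := Finset.card_erase_add_one hx
      omega

end IsConnectedSubgraph

variable [DecidableEq V] [DecidableEq ι]

lemma IsRootedSubgraph.insert_edge (h : IsRootedSubgraph f v K S) {x : ι} {u w : V}
    (hu : u ∈ K) (hx : f x = s(u, w)) : IsRootedSubgraph f v (insert w K) (insert x S) where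
  root_mem := Finset.mem_insert_of_mem h.root_mem
  mem_of_mem_edge y hy p hp := by
    rcases Finset.mem_insert.1 hy with rfl | hy
    · rw [hx, Sym2.mem_iff] at hp
      rcases hp with rfl | rfl
      · exact Finset.mem_insert_of_mem hu
      · exact Finset.mem_insert_self _ _
    · exact Finset.mem_insert_of_mem (h.mem_of_mem_edge y hy p hp)

namespace IsConnectedSubgraph

lemma closesEars_of_hasNoPendant (h : IsConnectedSubgraph f v P E) (hE : HasNoPendant f v E)
    (hKS : IsRootedSubgraph f v K S) (hK : K ⊆ P) (hS : S ⊆ E) {u : V} (hu : u ∈ K) {x : ι}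
    (hx : x ∈ E) (hxS : x ∉ S) (hux : u ∈ f x) {r : ℕ}
    (hcard : S.card + P.card + r ≤ E.card + K.card) : ClosesEars f r K u S := by
  induction hN : E.card - S.card generalizing K S u x r with
  | zero =>
    have := Finset.card_lt_card (Finset.ssubset_iff_of_subset hS |>.2 ⟨x, hx, hxS⟩)
    omega
  | succ N ih =>
    obtain ⟨w, hw⟩ := hux
    have hcardS := Finset.card_insert_of_notMem hxS
    have hSE : insert x S ⊆ E := Finset.insert_subset hx hS
    have hKS' := hKS.insert_edge hu hw
    have hwx : w ∈ f x := hw ▸ Sym2.mem_mk_right u w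
    by_cases hwK : w ∈ K
    · rw [Finset.insert_eq_of_mem hwK] at hKS'
      have hcardK := Finset.card_le_card hK
      obtain _ | _ | r := r
      · exact .done
      · exact .close hxS hwK hw hu .done
      · obtain ⟨u', hu', y, hy, hyS, hu'y⟩ := h.exists_unused_edge hKS' hK (by omega)
        exact .close hxS hwK hw hu' (ih hKS' hK hSE hu' hy hyS hu'y (by omega) (by omega))
    · have hcardK := Finset.card_insert_of_notMem hwK
      have hwv : w ≠ v := fun hwv => hwK (hwv ▸ hKS.root_mem)
      obtain ⟨y, hy, hyx, hwy⟩ := hE x hx w hwx hwv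
      have hyS : y ∉ insert x S := by
        rw [Finset.mem_insert, not_or]
        exact ⟨hyx, fun hyS => hwK (hKS.mem_of_mem_edge y hyS w hwy)⟩
      exact .extend hxS hwK hw (ih hKS' (Finset.insert_subset (h.mem_of_mem_edge x hx w hwx) hK)
        hSE (Finset.mem_insert_self w K) hy hyS hwy (by omega) (by omega))

lemma closesEars (h : IsConnectedSubgraph f v P E) {j : ℕ} (hj : P.card + j ≤ E.card) :
    ClosesEars f (j + 1) {v} v ∅ := by
  obtain ⟨P', E', h', hE', hj'⟩ := h.exists_hasNoPendant hj
  have hroot : IsRootedSubgraph f v {v} ∅ := ⟨Finset.mem_singleton_self v, by simp⟩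
  have hsub : {v} ⊆ P' := Finset.singleton_subset_iff.2 h'.root_mem
  have hpos : 0 < P'.card := Finset.card_pos.2 ⟨v, h'.root_mem⟩
  obtain ⟨u, hu, x, hx, hxS, hux⟩ := h'.exists_unused_edge hroot hsub (by
    rw [Finset.card_empty]; omega)
  obtain rfl := Finset.mem_singleton.1 hu
  exact h'.closesEars_of_hasNoPendant hE' hroot hsub (Finset.empty_subset E') hu hx hxS hux (by
    rw [Finset.card_empty, Finset.card_singleton]; omega)

end IsConnectedSubgraph

end Multigraph

section UnionBound

variable {V ι : Type*} [Fintype V] [Fintype ι] [DecidableEq V] [DecidableEq ι]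

/-- The event of the union bound: the multigraphs with edges drawn from the host graph `G` that
agree with `φ` on the edges in `S` and in which the walk at `u`, having visited `K` and traversed
`S`, can close `r` ears. -/
noncomputable def earEvent (G : SimpleGraph V) [DecidableRel G.Adj] (r : ℕ) (K : Finset V) (u : V)
    (S : Finset ι) (φ : ι → Sym2 V) : Finset (ι → Sym2 V) :=
  {e ∈ Fintype.piFinset fun _ => G.edgeFinset | (∀ x ∈ S, e x = φ x) ∧ ClosesEars e r K u S}

/-- A supersolution `B r k` of the recursion that the union bound yields for the probability of
closing `r ≤ R` ears after `k` vertices have been visited, when `N` edges are drawn from the `D`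
edges of a host graph of maximum degree at most `d`. -/
structure IsEarMajorant (N d D R : ℕ) (B : ℕ → ℕ → ℝ) : Prop where
  nonneg : ∀ r k, 0 ≤ B r k
  one_le : ∀ k, 1 ≤ B 0 k
  step : ∀ r < R, ∀ k, N * (d * B (r + 1) (k + 1) + k ^ 2 * B r k) ≤ D * B (r + 1) k

lemma card_filter_agree_le {α : Type*} [DecidableEq α] (D : Finset α) (S : Finset ι) (φ : ι → α) :
    Finset.card {e ∈ Fintype.piFinset fun _ : ι => D | ∀ x ∈ S, e x = φ x} ≤ D.card ^ Sᶜ.card := by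
  have hsub : {e ∈ Fintype.piFinset fun _ : ι => D | ∀ x ∈ S, e x = φ x} ⊆
      Fintype.piFinset fun x => if x ∈ S then {φ x} else D := by
    intro e he
    obtain ⟨heD, heS⟩ := Finset.mem_filter.1 he
    refine Fintype.mem_piFinset.2 fun x => ?_
    split_ifs with hx
    · exact Finset.mem_singleton.2 (heS x hx)
    · exact Fintype.mem_piFinset.1 heD x
  refine (Finset.card_le_card hsub).trans_eq ?_
  simp only [Fintype.card_piFinset, apply_ite Finset.card, Finset.card_singleton,
    Finset.prod_ite, Finset.prod_const_one, one_mul, Finset.prod_const]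
  congr 2
  ext x
  simp

lemma cast_card_biUnion_le_mul {α β : Type*} [DecidableEq β] (s : Finset α) (t : α → Finset β)
    {b : ℝ} (h : ∀ a ∈ s, ((t a).card : ℝ) ≤ b) : ((s.biUnion t).card : ℝ) ≤ s.card * b := by
  calc ((s.biUnion t).card : ℝ) ≤ ∑ a ∈ s, ((t a).card : ℝ) := mod_cast Finset.card_biUnion_le
    _ ≤ s.card * b := by simpa using Finset.sum_le_card_nsmul s (fun a => ((t a).card : ℝ)) b h

variable {G : SimpleGraph V} [DecidableRel G.Adj]

lemma earEvent_succ_subset (r : ℕ) (K : Finset V) (u : V) (S : Finset ι) (φ : ι → Sym2 V) :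
    earEvent G (r + 1) K u S φ ⊆ Sᶜ.biUnion fun x =>
      ((G.neighborFinset u \ K).biUnion fun w =>
        earEvent G (r + 1) (insert w K) w (insert x S) (Function.update φ x s(u, w))) ∪
      (K ×ˢ K).biUnion fun p =>
        earEvent G r K p.2 (insert x S) (Function.update φ x s(u, p.1)) := by
  intro e he
  obtain ⟨heG, hagree, hears⟩ := Finset.mem_filter.1 he
  have hagree' {x : ι} {w : V} (hf : e x = s(u, w)) :
      ∀ y ∈ insert x S, e y = Function.update φ x s(u, w) y := by
    intro y hy
    obtain rfl | hyx := eq_or_ne y x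
    · rw [Function.update_self, hf]
    · rw [Function.update_of_ne hyx, hagree y (Finset.mem_of_mem_insert_of_ne hy hyx)]
  cases hears with
  | @extend _ _ _ _ x w hx hw hf h =>
    have hadj : w ∈ G.neighborFinset u := by
      rw [SimpleGraph.mem_neighborFinset, ← SimpleGraph.mem_edgeSet, ← SimpleGraph.mem_edgeFinset,
        ← hf]
      exact Fintype.mem_piFinset.1 heG x
    exact Finset.mem_biUnion.2 ⟨x, Finset.mem_compl.2 hx, Finset.mem_union_left _ <|
      Finset.mem_biUnion.2 ⟨w, Finset.mem_sdiff.2 ⟨hadj, hw⟩,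
        Finset.mem_filter.2 ⟨heG, hagree' hf, h⟩⟩⟩
  | @close _ _ _ _ x w u' hx hw hf hu' h =>
    exact Finset.mem_biUnion.2 ⟨x, Finset.mem_compl.2 hx, Finset.mem_union_right _ <|
      Finset.mem_biUnion.2 ⟨(w, u'), Finset.mem_product.2 ⟨hw, hu'⟩,
        Finset.mem_filter.2 ⟨heG, hagree' hf, h⟩⟩⟩

lemma card_earEvent_le_pow (r : ℕ) (K : Finset V) (u : V) (S : Finset ι) (φ : ι → Sym2 V) :
    (earEvent G r K u S φ).card ≤ G.edgeFinset.card ^ Sᶜ.card :=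
  (Finset.card_le_card (Finset.monotone_filter_right _ fun _ _ => And.left)).trans
    (card_filter_agree_le G.edgeFinset S φ)

lemma card_earEvent_succ_le {d r : ℕ} (hG : ∀ u, G.degree u ≤ d) {K : Finset V} {S : Finset ι}
    {b₁ b₂ : ℝ} (hb₁ : 0 ≤ b₁)
    (h₁ : ∀ x ∉ S, ∀ w ∉ K, ∀ φ,
      ((earEvent G (r + 1) (insert w K) w (insert x S) φ).card : ℝ) ≤ b₁)
    (h₂ : ∀ x ∉ S, ∀ u ∈ K, ∀ φ, ((earEvent G r K u (insert x S) φ).card : ℝ) ≤ b₂)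
    (u : V) (φ : ι → Sym2 V) :
    ((earEvent G (r + 1) K u S φ).card : ℝ) ≤ Sᶜ.card * (d * b₁ + K.card ^ 2 * b₂) := by
  refine (Nat.cast_le.2 (Finset.card_le_card (earEvent_succ_subset r K u S φ))).trans
    (cast_card_biUnion_le_mul _ _ fun x hx => ?_)
  rw [Finset.mem_compl] at hx
  have hextend := cast_card_biUnion_le_mul (G.neighborFinset u \ K) (fun w =>
    earEvent G (r + 1) (insert w K) w (insert x S) (Function.update φ x s(u, w)))
    fun w hw => h₁ x hx w (Finset.mem_sdiff.1 hw).2 _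
  have hclose := cast_card_biUnion_le_mul (K ×ˢ K) (fun p =>
    earEvent G r K p.2 (insert x S) (Function.update φ x s(u, p.1)))
    fun p hp => h₂ x hx p.2 (Finset.mem_product.1 hp).2 _
  have hdeg : ((G.neighborFinset u \ K).card : ℝ) ≤ d :=
    mod_cast (Finset.card_le_card Finset.sdiff_subset).trans (hG u)
  rw [Finset.card_product, Nat.cast_mul, ← sq] at hclose
  refine (Nat.cast_le.2 (Finset.card_union_le _ _)).trans ?_
  rw [Nat.cast_add]
  exact add_le_add (hextend.trans (mul_le_mul_of_nonneg_right hdeg hb₁)) hclose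

namespace IsEarMajorant

variable {d R : ℕ} {B : ℕ → ℕ → ℝ}

lemma card_earEvent_zero_le {N : ℕ} (hB : IsEarMajorant N d G.edgeFinset.card R B)
    (K : Finset V) (u : V) (S : Finset ι) (φ : ι → Sym2 V) :
    ((earEvent G 0 K u S φ).card : ℝ) ≤ (G.edgeFinset.card : ℝ) ^ Sᶜ.card * B 0 K.card :=
  calc ((earEvent G 0 K u S φ).card : ℝ) ≤ (G.edgeFinset.card : ℝ) ^ Sᶜ.card :=
        mod_cast card_earEvent_le_pow 0 K u S φ
    _ ≤ (G.edgeFinset.card : ℝ) ^ Sᶜ.card * B 0 K.card :=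
        le_mul_of_one_le_right (by positivity) (hB.one_le _)

lemma card_earEvent_le (hB : IsEarMajorant (Fintype.card ι) d G.edgeFinset.card R B)
    (hG : ∀ u, G.degree u ≤ d) {r : ℕ} (hr : r ≤ R) (K : Finset V) (u : V) (S : Finset ι)
    (φ : ι → Sym2 V) :
    ((earEvent G r K u S φ).card : ℝ) ≤ (G.edgeFinset.card : ℝ) ^ Sᶜ.card * B r K.card := by
  induction hs : Sᶜ.card generalizing r K u S φ with
  | zero =>
    cases r with
    | zero => exact hs ▸ hB.card_earEvent_zero_le K u S φ
    | succ r =>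
      have hS : S = Finset.univ := by simpa using Finset.card_eq_zero.1 hs
      have h0 := card_earEvent_succ_le hG (r := r) (K := K) (b₂ := 0) le_rfl
        (fun x hx => absurd (hS ▸ Finset.mem_univ x) hx)
        (fun x hx => absurd (hS ▸ Finset.mem_univ x) hx) u φ
      rw [hs, Nat.cast_zero, zero_mul] at h0
      exact h0.trans (mul_nonneg (by positivity) (hB.nonneg _ _))
  | succ s ih =>
    cases r with
    | zero => exact hs ▸ hB.card_earEvent_zero_le K u S φ
    | succ r =>
      have hcard {x : ι} (hx : x ∉ S) : (insert x S)ᶜ.card = s := by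
        rw [Finset.compl_insert, Finset.card_erase_of_mem (Finset.mem_compl.2 hx), hs,
          Nat.add_sub_cancel]
      set D : ℝ := (G.edgeFinset.card : ℝ)
      set k := K.card
      have hSN : (Sᶜ.card : ℝ) ≤ Fintype.card ι := mod_cast Finset.card_le_univ Sᶜ
      have h₁ : 0 ≤ B (r + 1) (k + 1) := hB.nonneg _ _
      have h₂ : 0 ≤ B r k := hB.nonneg _ _
      calc ((earEvent G (r + 1) K u S φ).card : ℝ)
          ≤ Sᶜ.card * (d * (D ^ s * B (r + 1) (k + 1)) + k ^ 2 * (D ^ s * B r k)) :=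
            card_earEvent_succ_le hG (by positivity)
              (fun x hx w hw φ' => Finset.card_insert_of_notMem hw ▸ ih hr _ _ _ _ (hcard hx))
              (fun x hx u' _ φ' => ih (Nat.le_of_succ_le hr) _ _ _ _ (hcard hx)) u φ
        _ ≤ Fintype.card ι * (d * (D ^ s * B (r + 1) (k + 1)) + k ^ 2 * (D ^ s * B r k)) := by
            gcongr
        _ = D ^ s * (Fintype.card ι * (d * B (r + 1) (k + 1) + k ^ 2 * B r k)) := by ring
        _ ≤ D ^ s * (D * B (r + 1) k) :=
            mul_le_mul_of_nonneg_left (hB.step r hr k) (by positivity)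
        _ = D ^ (s + 1) * B (r + 1) k := by ring

end IsEarMajorant

end UnionBound

theorem IsEarMajorant.card_excess_le {V ι : Type*} [Fintype V] [Fintype ι] [DecidableEq ι]
    {G : SimpleGraph V} [DecidableRel G.Adj] {d R : ℕ} {B : ℕ → ℕ → ℝ}
    (hB : IsEarMajorant (Fintype.card ι) d G.edgeFinset.card R B)
    (hG : ∀ u, G.degree u ≤ d) (v : V) {j : ℕ} (hj : j + 1 ≤ R) :
    (Finset.card {e ∈ Fintype.piFinset fun _ : ι => G.edgeFinset |
      ∃ P E, IsConnectedSubgraph e v P E ∧ P.card + j ≤ E.card} : ℝ) ≤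
      (G.edgeFinset.card : ℝ) ^ Fintype.card ι * B (j + 1) 1 := by
  classical
  have hears : ((earEvent G (j + 1) {v} v (∅ : Finset ι) fun _ => s(v, v)).card : ℝ) ≤
      (G.edgeFinset.card : ℝ) ^ Fintype.card ι * B (j + 1) 1 := by
    simpa only [Finset.compl_empty, Finset.card_univ, Finset.card_singleton] using
      hB.card_earEvent_le hG hj {v} v ∅ fun _ => s(v, v)
  refine (Nat.cast_le.2 (Finset.card_le_card ?_)).trans hears
  refine Finset.monotone_filter_right _ fun e _ ⟨P, E, h, hPE⟩ => ⟨?_, h.closesEars hPE⟩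
  exact fun x hx => absurd hx (Finset.notMem_empty x)

section Majorant

lemma isEarMajorant_pow {N d D R : ℕ} {A M : ℝ} (hA : 0 < A) (hM : 0 < M)
    (h : N * (d * (1 + M⁻¹) ^ (2 * R) + A⁻¹) ≤ D) :
    IsEarMajorant N d D R fun r k => (A * (k + M) ^ 2) ^ r where
  nonneg r k := by positivity
  one_le k := (pow_zero _).ge
  step r hr k := by
    set B : ℝ := (A * (k + M) ^ 2) ^ (r + 1) with hB
    have hextend : (A * ((k + 1 : ℕ) + M) ^ 2) ^ (r + 1) ≤ (1 + M⁻¹) ^ (2 * R) * B := by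
      have hshift : ((k + 1 : ℕ) : ℝ) + M ≤ (1 + M⁻¹) * (k + M) := by
        have hkM : 0 ≤ M⁻¹ * k := by positivity
        push_cast
        linarith [inv_mul_cancel₀ hM.ne']
      calc (A * ((k + 1 : ℕ) + M) ^ 2) ^ (r + 1)
          ≤ (A * ((1 + M⁻¹) * (k + M)) ^ 2) ^ (r + 1) := by gcongr
        _ = (1 + M⁻¹) ^ (2 * (r + 1)) * B := by rw [hB, pow_mul, ← mul_pow]; ring
        _ ≤ (1 + M⁻¹) ^ (2 * R) * B := by
            gcongr
            · exact le_add_of_nonneg_right (by positivity)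
            · exact hr
    have hclose : (k : ℝ) ^ 2 * (A * (k + M) ^ 2) ^ r ≤ A⁻¹ * B := by
      calc (k : ℝ) ^ 2 * (A * (k + M) ^ 2) ^ r
          ≤ (k + M) ^ 2 * (A * (k + M) ^ 2) ^ r := by
            gcongr
            exact le_add_of_nonneg_right hM.le
        _ = A⁻¹ * B := by
            rw [hB, pow_succ' _ r, ← mul_assoc, ← mul_assoc, inv_mul_cancel₀ hA.ne', one_mul]
    calc (N : ℝ) * (d * (A * ((k + 1 : ℕ) + M) ^ 2) ^ (r + 1) + k ^ 2 * (A * (k + M) ^ 2) ^ r)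
        ≤ N * (d * ((1 + M⁻¹) ^ (2 * R) * B) + A⁻¹ * B) := by gcongr
      _ = N * (d * (1 + M⁻¹) ^ (2 * R) + A⁻¹) * B := by ring
      _ ≤ D * B := by gcongr

lemma exists_isEarMajorant {ε : ℝ} (hε : 0 < ε) :
    ∃ Q : ℝ, 1 ≤ Q ∧ ∀ m n R : ℕ, 0 < m → 0 < R → (1 + ε) * n ≤ m →
      ∃ B, IsEarMajorant n m (m ^ 2) R B ∧ B R 1 ≤ (Q * R ^ 2 / m) ^ R := by
  set L := Real.log (1 + ε / 2)
  have hL : 0 < L := Real.log_pos (by linarith)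
  refine ⟨max 1 (2 / ε * (1 + 2 / L) ^ 2), le_max_left _ _, fun m n R hm hR hnm => ?_⟩
  set M : ℝ := 2 / L * R with hMdef
  have hM : 0 < M := by positivity
  set A : ℝ := 2 / (ε * m) with hAdef
  have hgrowth : (1 + M⁻¹) ^ (2 * R) ≤ 1 + ε / 2 := by
    calc (1 + M⁻¹) ^ (2 * R) ≤ Real.exp M⁻¹ ^ (2 * R) := by
          gcongr
          linarith [Real.add_one_le_exp M⁻¹]
      _ = Real.exp L := by
          rw [← Real.exp_nat_mul, hMdef]
          congr 1
          push_cast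
          field_simp
      _ = 1 + ε / 2 := Real.exp_log (by positivity)
  refine ⟨_, isEarMajorant_pow (A := A) (M := M) (by positivity) hM ?_, ?_⟩
  · calc (n : ℝ) * (m * (1 + M⁻¹) ^ (2 * R) + A⁻¹)
        ≤ n * (m * (1 + ε / 2) + A⁻¹) := by gcongr
      _ = m * ((1 + ε) * n) := by rw [hAdef]; field_simp; ring
      _ ≤ m * m := by gcongr
      _ = (m ^ 2 : ℕ) := by push_cast; ring
  · gcongr
    calc A * ((1 : ℕ) + M) ^ 2 ≤ A * (R + M) ^ 2 := by gcongr; exact_mod_cast hR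
      _ = 2 / ε * (1 + 2 / L) ^ 2 * R ^ 2 / m := by rw [hAdef, hMdef]; field_simp
      _ ≤ max 1 (2 / ε * (1 + 2 / L) ^ 2) * R ^ 2 / m := by gcongr; exact le_max_right _ _

end Majorant

section CompleteBipartiteGraph

lemma card_edgeFinset_completeBipartiteGraph (V W : Type*) [Fintype V] [Fintype W]
    [Fintype (completeBipartiteGraph V W).edgeSet] :
    (completeBipartiteGraph V W).edgeFinset.card = Fintype.card V * Fintype.card W := by
  have h := SimpleGraph.encard_edgeSet_completeBipartiteGraph (W₁ := V) (W₂ := W)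
  rw [← SimpleGraph.coe_edgeFinset, Set.encard_coe_eq_coe_finsetCard] at h
  simpa only [ENat.card_eq_coe_fintype_card, ← Nat.cast_mul, Nat.cast_inj] using h

lemma degree_completeBipartiteGraph_le {V W : Type*} [Fintype V] [Fintype W] (u : V ⊕ W)
    [Fintype ((completeBipartiteGraph V W).neighborSet u)] :
    (completeBipartiteGraph V W).degree u ≤ max (Fintype.card V) (Fintype.card W) := by
  rw [← SimpleGraph.card_neighborFinset_eq_degree]
  obtain a | b := u
  · have hnbr : (completeBipartiteGraph V W).neighborFinset (.inl a) =
        Finset.univ.map ⟨Sum.inr, Sum.inr_injective⟩ := by ext w; cases w <;> simp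
    rw [hnbr, Finset.card_map]
    exact le_max_right _ _
  · have hnbr : (completeBipartiteGraph V W).neighborFinset (.inr b) =
        Finset.univ.map ⟨Sum.inl, Sum.inl_injective⟩ := by ext w; cases w <;> simp
    rw [hnbr, Finset.card_map]
    exact le_max_left _ _

end CompleteBipartiteGraph

section CuckooGraph

variable {n m : ℕ}

/-- The edge of the cuckoo graph that belongs to the item `x`, as an unordered pair, which presents
the cuckoo graph as a multigraph with edges indexed by the items. -/
def cuckooEdge (h₀ h₁ : Fin n → Fin m) (x : Fin n) : Sym2 (Fin m ⊕ Fin m) :=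
  s(Sum.inl (h₀ x), Sum.inr (h₁ x))

lemma cuckooConn_edge (h₀ h₁ : Fin n → Fin m) (x : Fin n) :
    cuckooConn n m h₀ h₁ (Sum.inl (h₀ x)) (Sum.inr (h₁ x)) :=
  .rel _ _ ⟨x, rfl, rfl⟩

lemma cuckooConn.mem_iff {h₀ h₁ : Fin n → Fin m} {K : Set (Fin m ⊕ Fin m)}
    (hK : ∀ x, Sum.inl (h₀ x) ∈ K ↔ Sum.inr (h₁ x) ∈ K) {u w : Fin m ⊕ Fin m}
    (h : cuckooConn n m h₀ h₁ u w) : u ∈ K ↔ w ∈ K := by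
  induction h with
  | rel u w huw =>
    obtain ⟨x, rfl, rfl⟩ := huw
    exact hK x
  | refl u => exact Iff.rfl
  | symm u w _ ih => exact ih.symm
  | trans u w z _ _ ih₁ ih₂ => exact ih₁.trans ih₂

lemma isConnectedSubgraph_component (h₀ h₁ : Fin n → Fin m) (v : Fin m ⊕ Fin m) :
    IsConnectedSubgraph (cuckooEdge h₀ h₁) v {u | cuckooConn n m h₀ h₁ u v}
      {x | cuckooConn n m h₀ h₁ (Sum.inl (h₀ x)) v} where
  root_mem := (Finset.mem_filter_univ v).2 (.refl v)
  mem_of_mem_edge x hx u hu := by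
    rw [Finset.mem_filter_univ] at hx ⊢
    rcases Sym2.mem_iff.1 hu with rfl | rfl
    · exact hx
    · exact (cuckooConn_edge h₀ h₁ x).symm.trans _ _ _ hx
  exists_crossing K hKP hv := by
    by_contra! hcut
    refine hKP.not_subset fun u hu => ?_
    rw [Finset.mem_filter_univ] at hu
    refine (cuckooConn.mem_iff (K := (K : Set (Fin m ⊕ Fin m))) (fun x => ?_) hu).2 hv
    have hmem {a} (ha : a ∈ K) : cuckooConn n m h₀ h₁ a v :=
      (Finset.mem_filter_univ a).1 (hKP.subset ha)
    refine ⟨fun hl => by_contra fun hr => ?_, fun hr => by_contra fun hl => ?_⟩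
    · exact hcut x ((Finset.mem_filter_univ x).2 (hmem hl)) _ hl _ hr rfl
    · refine hcut x ((Finset.mem_filter_univ x).2 ?_) _ hr _ hl Sym2.eq_swap
      exact (cuckooConn_edge h₀ h₁ x).trans _ _ _ (hmem hr)

lemma exists_isConnectedSubgraph_of_lt_cuckooB {h₀ h₁ : Fin n → Fin m} {v : Fin m ⊕ Fin m}
    {j : ℕ} (hj : j + 1 ≤ cuckooB n m h₀ h₁ v) :
    ∃ P E, IsConnectedSubgraph (cuckooEdge h₀ h₁) v P E ∧ P.card + j ≤ E.card := by
  refine ⟨_, _, isConnectedSubgraph_component h₀ h₁ v, ?_⟩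
  rw [← Fintype.card_subtype, ← Fintype.card_subtype, ← Nat.card_eq_fintype_card,
    ← Nat.card_eq_fintype_card]
  change cuckooV n m h₀ h₁ v + j ≤ cuckooC n m h₀ h₁ v
  rw [cuckooB] at hj
  omega

lemma cuckooEdge_mem_edgeFinset (h₀ h₁ : Fin n → Fin m) (x : Fin n) :
    cuckooEdge h₀ h₁ x ∈ (completeBipartiteGraph (Fin m) (Fin m)).edgeFinset := by
  simp [cuckooEdge]

lemma cuckooEdge_injective :
    Function.Injective fun ω : HashPair n m => cuckooEdge ω.1 ω.2 := by
  intro ω ω' h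
  have hx (x : Fin n) := congrFun h x
  simp only [cuckooEdge, Sym2.eq_iff, Sum.inl.injEq, Sum.inr.injEq, reduceCtorEq, and_false,
    or_false] at hx
  exact Prod.ext (funext fun x => (hx x).1) (funext fun x => (hx x).2)

lemma card_hashPair (n m : ℕ) : Nat.card (HashPair n m) = (m ^ 2) ^ n := by
  rw [Nat.card_eq_fintype_card, Fintype.card_prod, Fintype.card_fun, Fintype.card_fin,
    Fintype.card_fin, ← sq, pow_right_comm]

lemma IsEarMajorant.cuckooPr_le {R : ℕ} {B : ℕ → ℕ → ℝ}
    (hB : IsEarMajorant n m (m ^ 2) R B) (v : Fin m ⊕ Fin m) {j : ℕ} (hj : j + 1 ≤ R) :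
    cuckooPr n m (fun ω => j + 1 ≤ cuckooB n m ω.1 ω.2 v) ≤ B (j + 1) 1 := by
  set G := completeBipartiteGraph (Fin m) (Fin m)
  have hGcard : G.edgeFinset.card = m ^ 2 := by
    rw [card_edgeFinset_completeBipartiteGraph, Fintype.card_fin, sq]
  set excess : Finset (Fin n → Sym2 (Fin m ⊕ Fin m)) :=
    {e ∈ Fintype.piFinset fun _ => G.edgeFinset |
      ∃ P E, IsConnectedSubgraph e v P E ∧ P.card + j ≤ E.card}
  have hexcess : (excess.card : ℝ) ≤ ((m ^ 2) ^ n : ℕ) * B (j + 1) 1 := by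
    have hB' : IsEarMajorant (Fintype.card (Fin n)) m G.edgeFinset.card R B := by
      rwa [hGcard, Fintype.card_fin]
    have hdeg (u : Fin m ⊕ Fin m) : G.degree u ≤ m := by
      simpa using degree_completeBipartiteGraph_le u
    have h := hB'.card_excess_le hdeg v hj
    rwa [hGcard, Fintype.card_fin, ← Nat.cast_pow] at h
  have hcard : Nat.card {ω : HashPair n m // j + 1 ≤ cuckooB n m ω.1 ω.2 v} ≤ excess.card := by
    rw [Nat.card_eq_fintype_card, Fintype.card_subtype]
    refine Finset.card_le_card_of_injOn _ (fun ω hω => ?_) cuckooEdge_injective.injOn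
    exact Finset.mem_filter.2 ⟨Fintype.mem_piFinset.2 (cuckooEdge_mem_edgeFinset ω.1 ω.2),
      exists_isConnectedSubgraph_of_lt_cuckooB ((Finset.mem_filter_univ ω).1 hω)⟩
  have hm : 0 < m := v.elim Fin.pos Fin.pos
  rw [cuckooPr, card_hashPair, div_le_iff₀' (by positivity)]
  exact (Nat.cast_le.2 hcard).trans hexcess

theorem exists_cuckooPr_le_pow {ε : ℝ} (hε : 0 < ε) :
    ∃ Q : ℝ, 1 ≤ Q ∧ ∀ m n : ℕ, (1 + ε) * n ≤ m → ∀ (v : Fin m ⊕ Fin m) (j : ℕ),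
      cuckooPr n m (fun ω => j + 1 ≤ cuckooB n m ω.1 ω.2 v) ≤
        (Q * (j + 1) ^ 2 / m) ^ (j + 1) := by
  obtain ⟨Q, hQ, hmajorant⟩ := exists_isEarMajorant hε
  refine ⟨Q, hQ, fun m n hnm v j => ?_⟩
  obtain ⟨B, hB, hB_le⟩ := hmajorant m n (j + 1) (v.elim Fin.pos Fin.pos) j.succ_pos hnm
  exact (hB.cuckooPr_le v le_rfl).trans (mod_cast hB_le)

lemma mul_succ_sq_pow_succ_le {Q : ℝ} (hQ : 1 ≤ Q) {j : ℕ} (hj : 1 ≤ j) :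
    (Q * (j + 1) ^ 2) ^ (j + 1) ≤ (16 * Q ^ 2 * j ^ 2) ^ j := by
  have hQpow : Q ^ (j + 1) ≤ (Q ^ 2) ^ j := by
    rw [← pow_mul]
    exact pow_le_pow_right₀ hQ (by omega)
  have htwo_mul : (j + 1 : ℝ) ≤ 2 * j := by
    have : (1 : ℝ) ≤ j := mod_cast hj
    linarith
  have htwo_pow : (j + 1 : ℝ) ≤ 2 ^ j := mod_cast Nat.lt_two_pow_self (n := j)
  calc (Q * (j + 1) ^ 2) ^ (j + 1) = Q ^ (j + 1) * (((j + 1) ^ 2) ^ j * (j + 1) ^ 2) := by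
        rw [mul_pow, pow_succ ((j + 1 : ℝ) ^ 2)]
    _ ≤ (Q ^ 2) ^ j * (((2 * j) ^ 2) ^ j * (2 ^ j) ^ 2) := by gcongr
    _ = (16 * Q ^ 2 * j ^ 2) ^ j := by
        rw [pow_right_comm 2 j 2, ← mul_pow, ← mul_pow]
        ring

theorem exists_cuckooPr_le_inv_mul_pow {ε : ℝ} (hε : 0 < ε) :
    ∃ C : ℝ, 0 < C ∧ ∀ m n : ℕ, (1 + ε) * n ≤ m → ∀ (v : Fin m ⊕ Fin m) (j : ℕ), 1 ≤ j →
      cuckooPr n m (fun ω => j + 1 ≤ cuckooB n m ω.1 ω.2 v) ≤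
        (m : ℝ)⁻¹ * (C * j ^ 2 / m) ^ j := by
  obtain ⟨Q, hQ, hPr⟩ := exists_cuckooPr_le_pow hε
  refine ⟨16 * Q ^ 2, by positivity, fun m n hnm v j hj => ?_⟩
  calc cuckooPr n m (fun ω => j + 1 ≤ cuckooB n m ω.1 ω.2 v)
      ≤ (Q * (j + 1) ^ 2 / m) ^ (j + 1) := hPr m n hnm v j
    _ = (m : ℝ)⁻¹ * ((Q * (j + 1) ^ 2) ^ (j + 1) / (m : ℝ) ^ j) := by
        rw [div_pow, pow_succ (m : ℝ), ← div_div, div_eq_inv_mul]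
    _ ≤ (m : ℝ)⁻¹ * ((16 * Q ^ 2 * j ^ 2) ^ j / (m : ℝ) ^ j) := by
        gcongr
        exact mul_succ_sq_pow_succ_le hQ hj
    _ = (m : ℝ)⁻¹ * (16 * Q ^ 2 * j ^ 2 / m) ^ j := by rw [div_pow]

theorem cuckoo_cyclotomic_tail_bound_general (ε : ℝ) (hε : 0 < ε) {β : ℝ} (hβ : β < 1 / 2) :
    ∃ α : ℝ, 0 < α ∧ ∃ m₀ : ℕ, ∀ m n : ℕ, m₀ ≤ m → (1 + ε) * n ≤ m →
      ∀ v : Fin m ⊕ Fin m, ∀ j : ℕ, 1 ≤ j → (j : ℝ) ≤ (m : ℝ) ^ β →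
        cuckooPr n m (fun ω => j + 1 ≤ cuckooB n m ω.1 ω.2 v) ≤ (m : ℝ) ^ (-1 - α * j) := by
  obtain ⟨C, hC, hPr⟩ := exists_cuckooPr_le_inv_mul_pow hε
  have hα : 0 < 1 / 2 - β := sub_pos.2 hβ
  obtain ⟨m₀, hm₀⟩ := Filter.eventually_atTop.1 <|
    ((tendsto_rpow_atTop hα).comp tendsto_natCast_atTop_atTop).eventually_ge_atTop C
  refine ⟨1 / 2 - β, hα, m₀, fun m n hm hnm v j hj hjm => ?_⟩
  have hm_pos : (0 : ℝ) < m := mod_cast v.elim Fin.pos Fin.pos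
  have hC_le : C ≤ (m : ℝ) ^ (1 / 2 - β) := hm₀ m hm
  calc cuckooPr n m (fun ω => j + 1 ≤ cuckooB n m ω.1 ω.2 v)
      ≤ (m : ℝ)⁻¹ * (C * j ^ 2 / m) ^ j := hPr m n hnm v j hj
    _ ≤ (m : ℝ)⁻¹ * ((m : ℝ) ^ (1 / 2 - β) * ((m : ℝ) ^ β) ^ 2 / m) ^ j := by gcongr
    _ = (m : ℝ)⁻¹ * ((m : ℝ) ^ (-(1 / 2 - β))) ^ j := by
        congr 2
        rw [← Real.rpow_mul_natCast hm_pos.le, ← Real.rpow_add hm_pos,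
          ← Real.rpow_sub_one hm_pos.ne']
        congr 1
        push_cast
        ring
    _ = (m : ℝ) ^ (-1 - (1 / 2 - β) * j) := by
        rw [← Real.rpow_mul_natCast hm_pos.le, ← Real.rpow_neg_one, ← Real.rpow_add hm_pos]
        congr 1
        ring

end CuckooGraph

/-- If `(1+ε)·n ≤ m` then there are constants `α > 0` and `m₀` depending only on `ε` such
that for every vertex `v` and every `1 ≤ j ≤ m^{1/6}`,
`Pr(B_v ≥ j+1) ≤ m^{−1−α·j}`. -/
theorem cuckoo_cyclotomic_tail_bound (ε : ℝ) (hε : 0 < ε) :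
    ∃ α : ℝ, 0 < α ∧ ∃ m₀ : ℕ, ∀ m n : ℕ, m₀ ≤ m → 1 ≤ n → (1 + ε) * n ≤ m →
      ∀ v : Fin m ⊕ Fin m, ∀ j : ℕ, 1 ≤ j → (j : ℝ) ≤ (m : ℝ) ^ ((1 : ℝ) / 6) →
        cuckooPr n m (fun ω => j + 1 ≤ cuckooB n m ω.1 ω.2 v)
          ≤ (m : ℝ) ^ (-1 - α * j) := by
  obtain ⟨α, hα, m₀, h⟩ :=
    cuckoo_cyclotomic_tail_bound_general ε hε (β := 1 / 6) (by norm_num)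
  exact ⟨α, hα, m₀, fun m n hm _ => h m n hm⟩
end

section
/- Fix a constant ε > 0. There exists a constant β ∈ (0,1), depending only on ε, such that for all positive integers n and m with (1+ε)·n ≤ m, every vertex v of the random cuckoo graph with n edges on parts of size m, and every natural number k ≥ 1, Pr(C(v) ≥ k) ≤ β^k. -/
open Classical

/-!
Explore the component of `v` one vertex at a time. When a vertex is processed, the items not yet
revealed are still uniform on the edges avoiding the processed vertices, and on average at most
`lam = 1 / (1 + ε)` of them are incident to it: every vertex other than `v` is reached through an
item of its own, so unrevealed items run out at least as fast as vertices. The number of items found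
is thus dominated by the total progeny of a branching process whose offspring has generating
function at most `exp (lam * (t - 1))`, so `E[z ^ C(v)] ≤ rho` as soon as
`exp (lam * (z * rho - 1)) ≤ rho`; the choice `rho = 1 / lam`, `z = lam - log lam > 1` attains
equality.

Markov's inequality gives `Pr(C(v) ≥ k) ≤ z ^ (-k) / lam`, which is vacuous for small `k`, while
`Pr(C(v) ≥ k) ≤ E[deg v] ≤ lam` for `k ≥ 1`. In the product of the two bounds the constants cancel,
so `Pr(C(v) ≥ k) ^ 2 ≤ z ^ (-k)`.
-/

namespace CuckooGraph

open Finset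

section Completions

variable {ι P : Type*} [Fintype ι] [DecidableEq ι]

/-- The possible outcomes of a random function `ι → P` once it is known to agree with `g` off `S`
and to take values in `D` on `S`. -/
def completions (S : Finset ι) (D : Finset P) (g : ι → P) : Finset (ι → P) :=
  Fintype.piFinset (S.piecewise (fun _ => D) fun x => {g x})

lemma mem_completions {S : Finset ι} {D : Finset P} {g h : ι → P} :
    h ∈ completions S D g ↔ (∀ x ∈ S, h x ∈ D) ∧ ∀ x ∉ S, h x = g x := by
  rw [completions, Fintype.mem_piFinset, ← forall_and]
  refine forall_congr' fun x => ?_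
  by_cases hx : x ∈ S <;> simp [hx]

lemma card_completions (S : Finset ι) (D : Finset P) (g : ι → P) :
    #(completions S D g) = #D ^ #S := by
  simp [completions, Fintype.card_piFinset, piecewise, apply_ite, prod_ite_mem]

lemma completions_univ (g : ι → P) [Fintype P] : completions univ univ g = univ := by
  ext h
  simp [mem_completions]

lemma filter_completions_eq (q : P → Prop) [DecidablePred q] {S T : Finset ι} {D : Finset P}
    {g g' : ι → P} (hT : T ⊆ S) (hg' : g' ∈ completions T {p ∈ D | q p} g) :
    {h ∈ completions S D g | {x ∈ S | q (h x)} = T ∧ T.piecewise h g = g'} =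
      completions (S \ T) {p ∈ D | ¬ q p} g' := by
  ext h
  simp only [mem_completions, mem_filter, mem_sdiff, Finset.ext_iff, funext_iff, piecewise] at hg' ⊢
  grind

lemma sum_completions_eq (q : P → Prop) [DecidablePred q] (S : Finset ι) (D : Finset P) (g : ι → P)
    (F : (ι → P) → ℝ) :
    ∑ h ∈ completions S D g, F h =
      ∑ T ∈ S.powerset, ∑ g' ∈ completions T {p ∈ D | q p} g,
        ∑ h ∈ completions (S \ T) {p ∈ D | ¬ q p} g', F h := by
  rw [← sum_fiberwise_of_maps_to (g := fun h => {x ∈ S | q (h x)}) (t := S.powerset)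
    fun h _ => mem_powerset.2 (filter_subset _ _)]
  refine sum_congr rfl fun T hT => ?_
  rw [← sum_fiberwise_of_maps_to (g := fun h => T.piecewise h g)
    (t := completions T {p ∈ D | q p} g)]
  · refine sum_congr rfl fun g' hg' => ?_
    rw [filter_filter, filter_completions_eq q (mem_powerset.1 hT) hg']
  · intro h hh
    simp only [mem_completions, mem_filter, Finset.ext_iff, piecewise] at hh ⊢
    grind

lemma sum_completions_le (q : P → Prop) [DecidablePred q] {S : Finset ι} {D : Finset P} {g : ι → P}
    {F : (ι → P) → ℝ} {c w : ℝ}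
    (hF : ∀ T ⊆ S, ∀ g' ∈ completions T {p ∈ D | q p} g,
      ∑ h ∈ completions (S \ T) {p ∈ D | ¬ q p} g', F h ≤
        c * w ^ #T * (#{p ∈ D | ¬ q p} : ℝ) ^ #(S \ T)) :
    ∑ h ∈ completions S D g, F h ≤
      c * (#{p ∈ D | q p} * w + #{p ∈ D | ¬ q p}) ^ #S := by
  rw [sum_completions_eq q, ← sum_pow_mul_eq_add_pow, mul_sum]
  refine sum_le_sum fun T hT => ?_
  rw [mem_powerset] at hT
  refine (sum_le_sum (hF T hT)).trans_eq ?_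
  rw [sum_const, card_completions, card_sdiff_of_subset hT, nsmul_eq_mul, mul_pow]
  push_cast
  ring

lemma sum_card_filter_apply [Fintype P] (q : P → Prop) [DecidablePred q] :
    ∑ h : ι → P, #{x | q (h x)} =
      Fintype.card ι * (#{p | q p} * Fintype.card P ^ (Fintype.card ι - 1)) := by
  have card_filter_apply (x : ι) :
      #{h : ι → P | q (h x)} = #{p | q p} * Fintype.card P ^ (Fintype.card ι - 1) := by
    rw [card_eq_sum_card_fiberwise (f := fun h : ι → P => h x) (t := {p | q p})
      (fun h hh => by simpa using hh), ← smul_eq_mul, ← sum_const]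
    refine sum_congr rfl fun p hp => ?_
    have hfiber (h : ι → P) : q (h x) ∧ h x = p ↔ h x = p :=
      and_iff_right_of_imp fun hxp => hxp ▸ (mem_filter.1 hp).2
    simp only [filter_filter, hfiber]
    simpa using Fintype.card_filter_piFinset_const (univ : Finset P) x p
  calc ∑ h : ι → P, #{x | q (h x)} = ∑ x, #{h : ι → P | q (h x)} :=
        sum_card_bipartiteAbove_eq_sum_card_bipartiteBelow fun (h : ι → P) (x : ι) => q (h x)
    _ = _ := by simp only [card_filter_apply, sum_const, card_univ, smul_eq_mul]

end Completions

section Exploration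

variable {ι V : Type*}

/-- `Reach S h A v`: in the hypergraph whose edges are the `h x` with `x ∈ S`, the vertex `v` lies
in the component of some vertex of `A`. -/
inductive Reach (S : Finset ι) (h : ι → Finset V) (A : Finset V) : V → Prop
  | base {v : V} (hv : v ∈ A) : Reach S h A v
  | step {x : ι} {u v : V} (hx : x ∈ S) (hu : u ∈ h x) (hv : v ∈ h x) (hr : Reach S h A u) :
      Reach S h A v

/-- The number of edges `h x`, `x ∈ S`, in the components of the vertices of `A`. -/
noncomputable def reachCount (S : Finset ι) (h : ι → Finset V) (A : Finset V) : ℕ :=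
  #{x ∈ S | ∃ v ∈ h x, Reach S h A v}

lemma Reach.nonempty {S : Finset ι} {h : ι → Finset V} {A : Finset V} {v : V}
    (hv : Reach S h A v) : A.Nonempty := by
  induction hv with
  | base hv => exact ⟨_, hv⟩
  | step _ _ _ _ ih => exact ih

lemma reachCount_empty (S : Finset ι) (h : ι → Finset V) : reachCount S h ∅ = 0 := by
  simp only [reachCount, card_eq_zero, filter_eq_empty_iff]
  rintro x - ⟨v, -, hv⟩
  exact not_nonempty_empty hv.nonempty

lemma Reach.eq_of_forall_notMem {S : Finset ι} {h : ι → Finset V} {u v : V}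
    (hu : ∀ x ∈ S, u ∉ h x) (hv : Reach S h {u} v) : v = u := by
  induction hv with
  | base hv => exact mem_singleton.1 hv
  | step hx ha _ _ ih => exact absurd (ih ▸ ha) (hu _ hx)

lemma reachCount_singleton_eq_zero {S : Finset ι} {h : ι → Finset V} {u : V}
    (hu : ∀ x ∈ S, u ∉ h x) : reachCount S h {u} = 0 := by
  simp only [reachCount, card_eq_zero, filter_eq_empty_iff]
  rintro x hx ⟨v, hvx, hv⟩
  exact hu x hx (hv.eq_of_forall_notMem hu ▸ hvx)

variable [DecidableEq V]

/-- The vertices still to be explored after processing `u ∈ A`, when the edges at `u` are the `h x`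
with `x ∈ T`. -/
def frontier (h : ι → Finset V) (A : Finset V) (u : V) (T : Finset ι) : Finset V :=
  A.erase u ∪ T.biUnion fun x => (h x).erase u

lemma card_frontier_le {h : ι → Finset V} {A : Finset V} {u : V} {T : Finset ι}
    (hu : u ∈ A) (hT : ∀ x ∈ T, u ∈ h x ∧ #(h x) ≤ 2) :
    #(frontier h A u T) ≤ #A - 1 + #T := by
  refine (card_union_le _ _).trans (Nat.add_le_add (card_erase_of_mem hu).le ?_)
  refine (card_biUnion_le_card_mul _ _ 1 fun x hx => ?_).trans_eq (mul_one _)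
  rw [card_erase_of_mem (hT x hx).1]
  exact Nat.sub_le_of_le_add (hT x hx).2

lemma frontier_congr {h h' : ι → Finset V} {T : Finset ι} (hh : ∀ x ∈ T, h x = h' x)
    (A : Finset V) (u : V) : frontier h A u T = frontier h' A u T := by
  rw [frontier, frontier, biUnion_congr rfl fun x hx => by rw [hh x hx]]

variable [DecidableEq ι]

lemma Reach.eq_or_reach_frontier {S T : Finset ι} {h : ι → Finset V} {A : Finset V} {u v : V}
    (hT : ∀ x ∈ S, u ∈ h x → x ∈ T) (hv : Reach S h A v) :
    v = u ∨ Reach (S \ T) h (frontier h A u T) v := by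
  induction hv with
  | base hv =>
    refine or_iff_not_imp_left.2 fun hvu => .base ?_
    exact mem_union_left _ (mem_erase.2 ⟨hvu, hv⟩)
  | @step x a b hx ha hb _ ih =>
    refine or_iff_not_imp_left.2 fun hbu => ?_
    by_cases hxT : x ∈ T
    · exact .base (mem_union_right _ (mem_biUnion.2 ⟨x, hxT, mem_erase.2 ⟨hbu, hb⟩⟩))
    · have hau : a ≠ u := fun h => hxT (hT x hx (h ▸ ha))
      exact .step (mem_sdiff.2 ⟨hx, hxT⟩) ha hb (ih.resolve_left hau)

lemma reachCount_le_card_add {S T : Finset ι} {h : ι → Finset V} {u : V}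
    (hT : ∀ x ∈ S, u ∈ h x → x ∈ T) (A : Finset V) :
    reachCount S h A ≤ #T + reachCount (S \ T) h (frontier h A u T) := by
  refine (card_le_card fun x hx => ?_).trans (card_union_le _ _)
  obtain ⟨hxS, v, hvx, hv⟩ := mem_filter.1 hx
  by_cases hxT : x ∈ T
  · exact mem_union_left _ hxT
  · have hvu : v ≠ u := fun h => hxT (hT x hxS (h ▸ hvx))
    exact mem_union_right _ (mem_filter.2 ⟨mem_sdiff.2 ⟨hxS, hxT⟩, v, hvx,
      (hv.eq_or_reach_frontier hT).resolve_left hvu⟩)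

end Exploration

section GeneratingFunction

lemma mul_add_pow_le {lam t rho e f : ℝ} {s : ℕ} (he : 0 ≤ e) (hf : 0 ≤ f) (ht : 1 ≤ t)
    (hrho : 1 ≤ rho) (hexp : Real.exp (lam * (t - 1)) ≤ rho) (hload : s * e ≤ lam * (e + f)) :
    (e * t + f) ^ s ≤ rho * (e + f) ^ s := by
  obtain hd | hd := (add_nonneg he hf).eq_or_lt
  · obtain ⟨rfl, rfl⟩ := (add_eq_zero_iff_of_nonneg he hf).1 hd.symm
    simpa using le_mul_of_one_le_left (pow_nonneg le_rfl s) hrho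
  · have hbase : e * t + f ≤ Real.exp (e / (e + f) * (t - 1)) * (e + f) :=
      calc e * t + f = (e / (e + f) * (t - 1) + 1) * (e + f) := by field_simp; ring
        _ ≤ _ := by gcongr; exact Real.add_one_le_exp _
    have hexponent : s * (e / (e + f) * (t - 1)) ≤ lam * (t - 1) := by
      rw [← mul_assoc, ← mul_div_assoc]
      exact mul_le_mul_of_nonneg_right ((div_le_iff₀ hd).2 hload) (sub_nonneg.2 ht)
    calc (e * t + f) ^ s ≤ (Real.exp (e / (e + f) * (t - 1)) * (e + f)) ^ s := by gcongr
      _ = Real.exp (s * (e / (e + f) * (t - 1))) * (e + f) ^ s := by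
        rw [mul_pow, Real.exp_nat_mul]
      _ ≤ rho * (e + f) ^ s := by
        gcongr
        exact (Real.exp_le_exp.2 hexponent).trans hexp

variable {ι P V : Type*} [Fintype ι] [DecidableEq ι] [DecidableEq V]

lemma sum_pow_reachCount_le_mul_sum {ends : P → Finset V} {z : ℝ} (hz : 1 ≤ z) {S T : Finset ι}
    {D : Finset P} {g : ι → P} (u : V) (A : Finset V) :
    ∑ h ∈ completions (S \ T) {p ∈ D | u ∉ ends p} g, z ^ reachCount S (ends ∘ h) A ≤
      z ^ #T * ∑ h ∈ completions (S \ T) {p ∈ D | u ∉ ends p} g,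
        z ^ reachCount (S \ T) (ends ∘ h) (frontier (ends ∘ g) A u T) := by
  rw [mul_sum]
  refine sum_le_sum fun h hh => ?_
  obtain ⟨havoid, hagree⟩ := mem_completions.1 hh
  have hT (x : ι) (hx : x ∈ S) (hux : u ∈ ends (h x)) : x ∈ T := by
    by_contra hxT
    exact (mem_filter.1 (havoid x (mem_sdiff.2 ⟨hx, hxT⟩))).2 hux
  have hfrontier : frontier (ends ∘ h) A u T = frontier (ends ∘ g) A u T :=
    frontier_congr (fun x hx => congrArg ends (hagree x fun hxS => (mem_sdiff.1 hxS).2 hx)) A u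
  rw [← pow_add, ← hfrontier]
  exact pow_le_pow_right₀ hz (reachCount_le_card_add hT A)

variable [Fintype P]

/-- The edges that have no endpoint among the explored vertices `X`. -/
def avoiding (ends : P → Finset V) (X : Finset V) : Finset P := {p | Disjoint (ends p) X}

/-- However the exploration has gone, with `X` explored and `s` edges left to draw among the
available ones, where `s + #X ≤ N`, the expected number of these incident to a given vertex `u` is
at most `lam`; multiplied out so as to avoid dividing by the number of available edges. -/
def LoadLE (ends : P → Finset V) (lam : ℝ) (N : ℕ) : Prop :=
  ∀ (s : ℕ) (X : Finset V) (u : V), s + #X ≤ N →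
    s * (#{p ∈ avoiding ends X | u ∈ ends p} : ℝ) ≤ lam * #(avoiding ends X)

lemma avoiding_empty (ends : P → Finset V) : avoiding ends ∅ = univ := by
  simp [avoiding]

lemma avoiding_insert (ends : P → Finset V) (u : V) (X : Finset V) :
    avoiding ends (insert u X) = {p ∈ avoiding ends X | u ∉ ends p} := by
  ext p
  simp [avoiding, and_comm]

theorem sum_pow_reachCount_le {ends : P → Finset V} {lam z rho : ℝ} {N : ℕ}
    (hends : ∀ p, #(ends p) ≤ 2) (hload : LoadLE ends lam N) (hz : 1 ≤ z) (hrho : 1 ≤ rho)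
    (hexp : Real.exp (lam * (z * rho - 1)) ≤ rho) (S : Finset ι) (A X : Finset V) (g : ι → P)
    (hcard : #S + #A + #X ≤ N + 1) :
    ∑ h ∈ completions S (avoiding ends X) g, z ^ reachCount S (ends ∘ h) A ≤
      rho ^ #A * (#(avoiding ends X) : ℝ) ^ #S := by
  induction hk : #S + #A using Nat.strong_induction_on generalizing S A X g with
  | _ k ih =>
  obtain rfl | ⟨u, hu⟩ := A.eq_empty_or_nonempty
  · simp [reachCount_empty, card_completions]
  have hA : #A - 1 + 1 = #A := Nat.sub_add_cancel (card_pos.2 ⟨u, hu⟩)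
  have hexplore : ∀ T ⊆ S, ∀ g' ∈ completions T {p ∈ avoiding ends X | u ∈ ends p} g,
      ∑ h ∈ completions (S \ T) {p ∈ avoiding ends X | u ∉ ends p} g',
          z ^ reachCount S (ends ∘ h) A ≤
        rho ^ (#A - 1) * (z * rho) ^ #T *
          (#{p ∈ avoiding ends X | u ∉ ends p} : ℝ) ^ #(S \ T) := by
    intro T hT g' hg'
    have hfrontier : #(frontier (ends ∘ g') A u T) ≤ #A - 1 + #T := card_frontier_le hu fun x hx =>
      ⟨(mem_filter.1 ((mem_completions.1 hg').1 x hx)).2, hends _⟩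
    have hST : #(S \ T) + #T = #S := card_sdiff_add_card_eq_card hT
    have hX : #(insert u X) ≤ #X + 1 := card_insert_le u X
    have ih := ih _ (by omega) (S \ T) (frontier (ends ∘ g') A u T) (insert u X) g' (by omega) rfl
    rw [avoiding_insert] at ih
    calc _ ≤ z ^ #T * _ := sum_pow_reachCount_le_mul_sum hz u A
      _ ≤ z ^ #T * (rho ^ (#A - 1 + #T) *
          (#{p ∈ avoiding ends X | u ∉ ends p} : ℝ) ^ #(S \ T)) := by
        gcongr
        exact ih.trans (by gcongr)
      _ = _ := by ring
  have hsplit : (#(avoiding ends X) : ℝ) =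
      #{p ∈ avoiding ends X | u ∈ ends p} + #{p ∈ avoiding ends X | u ∉ ends p} :=
    mod_cast (card_filter_add_card_filter_not _).symm
  calc _ ≤ rho ^ (#A - 1) * (_ * (z * rho) + _) ^ #S := sum_completions_le (u ∈ ends ·) hexplore
    _ ≤ rho ^ (#A - 1) * (rho * (#(avoiding ends X) : ℝ) ^ #S) := by
      rw [hsplit]
      gcongr
      refine mul_add_pow_le (Nat.cast_nonneg _) (Nat.cast_nonneg _)
        (one_le_mul_of_one_le_of_one_le hz hrho) hrho hexp ?_
      rw [← hsplit]
      exact hload #S X u (by omega)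
    _ = rho ^ #A * (#(avoiding ends X) : ℝ) ^ #S := by rw [← mul_assoc, ← pow_succ, hA]

theorem sum_pow_reachCount_singleton_le {ends : P → Finset V} {lam z rho : ℝ}
    (hends : ∀ p, #(ends p) ≤ 2) (hload : LoadLE ends lam (Fintype.card ι)) (hz : 1 ≤ z)
    (hrho : 1 ≤ rho) (hexp : Real.exp (lam * (z * rho - 1)) ≤ rho) (v : V) :
    ∑ h : ι → P, z ^ reachCount univ (ends ∘ h) {v} ≤
      rho * (Fintype.card P : ℝ) ^ Fintype.card ι := by
  obtain hP | ⟨⟨g⟩⟩ := isEmpty_or_nonempty (ι → P)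
  · rw [univ_eq_empty, sum_empty]
    positivity
  · simpa [avoiding_empty, completions_univ] using
      sum_pow_reachCount_le hends hload hz hrho hexp univ {v} ∅ g (by simp)

lemma sum_card_incident_le {ends : P → Finset V} {lam : ℝ} (hlam : 0 ≤ lam)
    (hload : LoadLE ends lam (Fintype.card ι)) (v : V) :
    ∑ h : ι → P, (#{x | v ∈ ends (h x)} : ℝ) ≤ lam * (Fintype.card P : ℝ) ^ Fintype.card ι := by
  have hload : Fintype.card ι * (#{p | v ∈ ends p} : ℝ) ≤ lam * Fintype.card P := by
    simpa [avoiding_empty] using hload (Fintype.card ι) ∅ v (by simp)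
  have hsum : ∑ h : ι → P, (#{x | v ∈ ends (h x)} : ℝ) = Fintype.card ι *
      (#{p | v ∈ ends p} * (Fintype.card P : ℝ) ^ (Fintype.card ι - 1)) :=
    mod_cast sum_card_filter_apply fun p => v ∈ ends p
  rw [hsum, ← mul_assoc]
  cases hn : Fintype.card ι with
  | zero => simpa using hlam
  | succ k =>
    rw [hn] at hload
    calc _ ≤ lam * Fintype.card P * (Fintype.card P : ℝ) ^ k := by
          rw [Nat.add_sub_cancel]
          gcongr
      _ = _ := by ring

end GeneratingFunction

section CompleteBipartite

variable {L R : Type*} [DecidableEq L] [DecidableEq R]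

/-- The two endpoints of an edge of the complete bipartite graph on `L ⊕ R`. -/
def endpoints (p : L × R) : Finset (L ⊕ R) := {Sum.inl p.1, Sum.inr p.2}

variable [Fintype L] [Fintype R]

lemma avoiding_endpoints (X : Finset (L ⊕ R)) :
    avoiding endpoints X = X.toLeftᶜ ×ˢ X.toRightᶜ := by
  ext p
  simp [avoiding, endpoints]

lemma le_mul_card_compl {α : Type*} [Fintype α] [DecidableEq α] {lam : ℝ} {N s r : ℕ}
    (hlam : lam ∈ Set.Icc 0 1) (hN : N ≤ lam * Fintype.card α) (hs : s + r ≤ N)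
    {Y : Finset α} (hY : #Y ≤ r) : s ≤ lam * (#Yᶜ : ℝ) := by
  have hcompl : (#Y : ℝ) + #Yᶜ = Fintype.card α := mod_cast card_add_card_compl Y
  have hY : (#Y : ℝ) ≤ r := mod_cast hY
  have hs : (s : ℝ) + r ≤ N := mod_cast hs
  have hscale : lam * #Y ≤ #Y := mul_le_of_le_one_left (Nat.cast_nonneg _) hlam.2
  rw [← hcompl, mul_add] at hN
  linarith

lemma loadLE_endpoints {lam : ℝ} {N : ℕ} (hlam : lam ∈ Set.Icc 0 1)
    (hL : N ≤ lam * Fintype.card L) (hR : N ≤ lam * Fintype.card R) :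
    LoadLE (endpoints : L × R → Finset (L ⊕ R)) lam N := by
  intro s X u hs
  rw [avoiding_endpoints, card_product, Nat.cast_mul]
  cases u with
  | inl a =>
    have hsub : {p ∈ X.toLeftᶜ ×ˢ X.toRightᶜ | Sum.inl a ∈ endpoints p} ⊆ {a} ×ˢ X.toRightᶜ := by
      intro p
      simp only [endpoints, mem_product]
      grind
    have hdeg : #{p ∈ X.toLeftᶜ ×ˢ X.toRightᶜ | Sum.inl a ∈ endpoints p} ≤ #X.toRightᶜ := by
      simpa using card_le_card hsub
    rw [← mul_assoc]
    exact mul_le_mul (le_mul_card_compl hlam hL hs card_toLeft_le) (mod_cast hdeg)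
      (Nat.cast_nonneg _) (mul_nonneg hlam.1 (Nat.cast_nonneg _))
  | inr b =>
    have hsub : {p ∈ X.toLeftᶜ ×ˢ X.toRightᶜ | Sum.inr b ∈ endpoints p} ⊆ X.toLeftᶜ ×ˢ {b} := by
      intro p
      simp only [endpoints, mem_product]
      grind
    have hdeg : #{p ∈ X.toLeftᶜ ×ˢ X.toRightᶜ | Sum.inr b ∈ endpoints p} ≤ #X.toLeftᶜ := by
      simpa using card_le_card hsub
    rw [mul_comm (#X.toLeftᶜ : ℝ), ← mul_assoc]
    exact mul_le_mul (le_mul_card_compl hlam hR hs card_toRight_le) (mod_cast hdeg)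
      (Nat.cast_nonneg _) (mul_nonneg hlam.1 (Nat.cast_nonneg _))

end CompleteBipartite

lemma le_inv_sqrt_pow {p lam z : ℝ} {k : ℕ} (hz : 0 < z) (hlam : 0 < lam) (hp : p ≤ lam)
    (hpz : p * z ^ k ≤ lam⁻¹) : p ≤ (√z)⁻¹ ^ k := by
  obtain hneg | hpos := lt_or_ge p 0
  · exact hneg.le.trans (by positivity)
  refine (pow_le_pow_iff_left₀ hpos (by positivity) two_ne_zero).1 ?_
  calc p ^ 2 = p * (p * z ^ k) / z ^ k := by field_simp
    _ ≤ lam * lam⁻¹ / z ^ k := by gcongr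
    _ = ((√z)⁻¹ ^ k) ^ 2 := by
      rw [mul_inv_cancel₀ hlam.ne', pow_right_comm, inv_pow, Real.sq_sqrt hz.le, inv_pow, one_div]

section Cuckoo

variable {n m : ℕ}

/-- The edges of the cuckoo graph, as sets of endpoints. -/
def itemEnds (ω : HashPair n m) (x : Fin n) : Finset (Fin m ⊕ Fin m) := endpoints (ω.1 x, ω.2 x)

lemma cuckooE_eq_sum (f : HashPair n m → ℝ) :
    cuckooE n m f = (∑ h : Fin n → Fin m × Fin m, f (fun x => (h x).1, fun x => (h x).2)) /
      (Fintype.card (Fin m × Fin m) : ℝ) ^ Fintype.card (Fin n) := by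
  let e := Equiv.arrowProdEquivProdArrow (Fin n) (fun _ => Fin m) (fun _ => Fin m)
  have hcard : Nat.card (HashPair n m) = Fintype.card (Fin m × Fin m) ^ Fintype.card (Fin n) := by
    simp [mul_pow]
  rw [cuckooE, hcard, Nat.cast_pow]
  exact congrArg (· / _) (e.sum_comp f).symm

lemma cuckooPr_mul_le_cuckooE {f : HashPair n m → ℝ} (hf : ∀ ω, 0 ≤ f ω) (c : ℝ)
    {E : HashPair n m → Prop} (hE : ∀ ω, E ω → c ≤ f ω) :
    cuckooPr n m E * c ≤ cuckooE n m f := by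
  rw [cuckooPr, cuckooE, div_mul_eq_mul_div]
  gcongr
  rw [Nat.card_eq_fintype_card, Fintype.card_subtype, ← nsmul_eq_mul, ← sum_const]
  calc ∑ ω with E ω, c ≤ ∑ ω with E ω, f ω := sum_le_sum fun ω hω => hE ω (mem_filter.1 hω).2
    _ ≤ _ := sum_le_sum_of_subset_of_nonneg (subset_univ _) fun ω _ _ => hf ω

lemma reach_iff_of_cuckooConn {ω : HashPair n m} {a b : Fin m ⊕ Fin m}
    (hab : cuckooConn n m ω.1 ω.2 a b) (A : Finset (Fin m ⊕ Fin m)) :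
    Reach univ (itemEnds ω) A a ↔ Reach univ (itemEnds ω) A b := by
  induction hab with
  | rel a b hadj =>
    obtain ⟨x, rfl, rfl⟩ := hadj
    have hl : Sum.inl (ω.1 x) ∈ itemEnds ω x := by simp [itemEnds, endpoints]
    have hr : Sum.inr (ω.2 x) ∈ itemEnds ω x := by simp [itemEnds, endpoints]
    exact ⟨.step (mem_univ x) hl hr, .step (mem_univ x) hr hl⟩
  | refl => rfl
  | symm _ _ _ ih => exact ih.symm
  | trans _ _ _ _ _ ih₁ ih₂ => exact ih₁.trans ih₂

lemma cuckooC_le_reachCount (ω : HashPair n m) (v : Fin m ⊕ Fin m) :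
    cuckooC n m ω.1 ω.2 v ≤ reachCount univ (itemEnds ω) {v} := by
  rw [cuckooC, Nat.card_eq_fintype_card, Fintype.card_subtype]
  refine card_le_card fun x hx => mem_filter.2 ⟨mem_univ x, Sum.inl (ω.1 x), ?_, ?_⟩
  · simp [itemEnds, endpoints]
  · exact (reach_iff_of_cuckooConn (mem_filter.1 hx).2 {v}).2 (.base (mem_singleton_self v))

lemma cuckooE_pow_cuckooC_le {lam z rho : ℝ} (hlam : lam ∈ Set.Icc 0 1) (hnm : n ≤ lam * m)
    (hz : 1 ≤ z) (hrho : 1 ≤ rho) (hexp : Real.exp (lam * (z * rho - 1)) ≤ rho)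
    (v : Fin m ⊕ Fin m) :
    cuckooE n m (fun ω => z ^ cuckooC n m ω.1 ω.2 v) ≤ rho := by
  have hload : LoadLE (endpoints : Fin m × Fin m → _) lam (Fintype.card (Fin n)) :=
    loadLE_endpoints hlam (by simpa using hnm) (by simpa using hnm)
  rw [cuckooE_eq_sum]
  refine div_le_of_le_mul₀ (by positivity) (by linarith) ?_
  refine (sum_le_sum fun h _ => ?_).trans
    (sum_pow_reachCount_singleton_le (fun _ => card_le_two) hload hz hrho hexp v)
  exact pow_le_pow_right₀ hz (cuckooC_le_reachCount (fun x => (h x).1, fun x => (h x).2) v)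

lemma cuckooE_degree_le {lam : ℝ} (hlam : lam ∈ Set.Icc 0 1) (hnm : n ≤ lam * m)
    (v : Fin m ⊕ Fin m) :
    cuckooE n m (fun ω => (#{x | v ∈ itemEnds ω x} : ℝ)) ≤ lam := by
  have hload : LoadLE (endpoints : Fin m × Fin m → _) lam (Fintype.card (Fin n)) :=
    loadLE_endpoints hlam (by simpa using hnm) (by simpa using hnm)
  rw [cuckooE_eq_sum]
  exact div_le_of_le_mul₀ (by positivity) hlam.1 (sum_card_incident_le hlam.1 hload v)

lemma cuckooPr_le_cuckooC_mul_pow_le {lam z rho : ℝ} (hlam : lam ∈ Set.Icc 0 1)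
    (hnm : n ≤ lam * m) (hz : 1 ≤ z) (hrho : 1 ≤ rho)
    (hexp : Real.exp (lam * (z * rho - 1)) ≤ rho) (v : Fin m ⊕ Fin m) (k : ℕ) :
    cuckooPr n m (fun ω => k ≤ cuckooC n m ω.1 ω.2 v) * z ^ k ≤ rho :=
  (cuckooPr_mul_le_cuckooE (fun _ => by positivity) _ fun _ hk => pow_le_pow_right₀ hz hk).trans
    (cuckooE_pow_cuckooC_le hlam hnm hz hrho hexp v)

lemma cuckooPr_le_cuckooC_le {lam : ℝ} (hlam : lam ∈ Set.Icc 0 1) (hnm : n ≤ lam * m)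
    (v : Fin m ⊕ Fin m) {k : ℕ} (hk : 1 ≤ k) :
    cuckooPr n m (fun ω => k ≤ cuckooC n m ω.1 ω.2 v) ≤ lam := by
  have hdeg (ω : HashPair n m) (hC : k ≤ cuckooC n m ω.1 ω.2 v) :
      (1 : ℝ) ≤ #{x | v ∈ itemEnds ω x} := by
    by_contra! hlt
    have hisolated : ∀ x ∈ univ, v ∉ itemEnds ω x :=
      filter_eq_empty_iff.1 (card_eq_zero.1 (Nat.lt_one_iff.1 (mod_cast hlt)))
    have hreach := cuckooC_le_reachCount ω v
    rw [reachCount_singleton_eq_zero hisolated] at hreach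
    omega
  rw [← mul_one (cuckooPr n m _)]
  exact (cuckooPr_mul_le_cuckooE (fun _ => Nat.cast_nonneg _) 1 hdeg).trans
    (cuckooE_degree_le hlam hnm v)

theorem cuckooPr_le_cuckooC_le_pow {lam : ℝ} (hlam : lam ∈ Set.Ioc 0 1) (hnm : n ≤ lam * m)
    (v : Fin m ⊕ Fin m) {k : ℕ} (hk : 1 ≤ k) :
    cuckooPr n m (fun ω => k ≤ cuckooC n m ω.1 ω.2 v) ≤ (√(lam - Real.log lam))⁻¹ ^ k := by
  have hz : 1 ≤ lam - Real.log lam := by linarith [Real.log_le_sub_one_of_pos hlam.1]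
  have hexp : Real.exp (lam * ((lam - Real.log lam) * lam⁻¹ - 1)) ≤ lam⁻¹ := by
    have hexponent : lam * ((lam - Real.log lam) * lam⁻¹ - 1) = -Real.log lam := by
      field_simp [hlam.1.ne']
      ring
    rw [hexponent, Real.exp_neg, Real.exp_log hlam.1]
  exact le_inv_sqrt_pow (by positivity) hlam.1
    (cuckooPr_le_cuckooC_le (Set.Ioc_subset_Icc_self hlam) hnm v hk)
    (cuckooPr_le_cuckooC_mul_pow_le (Set.Ioc_subset_Icc_self hlam) hnm hz
      ((one_le_inv₀ hlam.1).2 hlam.2) hexp v k)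

end Cuckoo

end CuckooGraph

/-- If `(1+ε)·n ≤ m` then there is a constant `β ∈ (0,1)` depending only on `ε` such that
for every vertex `v` and every `k ≥ 1`, `Pr(C(v) ≥ k) ≤ β^k`. -/
theorem cuckoo_component_geometric_tail (ε : ℝ) (hε : 0 < ε) :
    ∃ β : ℝ, 0 < β ∧ β < 1 ∧ ∀ n m : ℕ, 0 < n → 0 < m → (1 + ε) * n ≤ m →
      ∀ v : Fin m ⊕ Fin m, ∀ k : ℕ, 1 ≤ k →
        cuckooPr n m (fun ω => k ≤ cuckooC n m ω.1 ω.2 v) ≤ β ^ k := by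
  set lam : ℝ := (1 + ε)⁻¹
  have hlam_pos : 0 < lam := by positivity
  have hlam_lt : lam < 1 := inv_lt_one_of_one_lt₀ (by linarith)
  have hz : 1 < lam - Real.log lam := by
    linarith [Real.log_lt_sub_one_of_pos hlam_pos hlam_lt.ne]
  refine ⟨(√(lam - Real.log lam))⁻¹, by positivity,
    inv_lt_one_of_one_lt₀ (Real.lt_sqrt_of_sq_lt (by simpa)), fun n m _ _ hnm v k hk => ?_⟩
  exact CuckooGraph.cuckooPr_le_cuckooC_le_pow ⟨hlam_pos, hlam_lt.le⟩
    ((le_inv_mul_iff₀ (by positivity)).2 hnm) v hk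
end

section
/- Fix a constant ε > 0. There exists a constant K, depending only on ε, such that for all positive integers n and m with (1+ε)·n ≤ m and every vertex v of the random cuckoo graph with n edges on parts of size m, the expected component size satisfies E[C(v)] ≤ K. -/
open Classical

/-!
The mean component size is bounded by a recursion on the number of edges. Every edge in the
component of `v` is either an edge `x` at `v`, or is joined to the far end of some such `x` without
using `x`. An item `x` hashes to `v` with probability `1 / m`, independently of its far end and of
the graph without `x`, and that far end is uniform. So a bound `q` on the mean size with one item
fewer gives the bound `(n / m) (1 + q)`, which is at most `q` for `q = 1 / ε` because
`(1 + ε) n ≤ m`.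
-/

section Multigraph

open Finset

variable {α V : Type*} (ends : α → Bool → V)

/-- Connectivity through the edges in `S` of the multigraph whose edge `x` joins `ends x false` to
`ends x true`. The labelling of the two ends by `Bool` makes `!c` the far end seen from `c`. -/
def EdgeConn (S : Finset α) : V → V → Prop :=
  Relation.EqvGen fun u v => ∃ x ∈ S, u = ends x false ∧ v = ends x true

/-- The edges in `S` lying in the component of `v` in the multigraph with edge set `S`. -/
noncomputable def componentEdges (S : Finset α) (v : V) : Finset α :=
  {x ∈ S | EdgeConn ends S (ends x false) v}

variable {ends}

theorem componentEdges_congr {ends' : α → Bool → V} {S : Finset α}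
    (h : ∀ x ∈ S, ends x = ends' x) (v : V) :
    componentEdges ends S v = componentEdges ends' S v := by
  have hconn : EdgeConn ends S = EdgeConn ends' S := by
    unfold EdgeConn
    congr! 5 with a b x
    exact and_congr_right fun hx => by rw [h x hx]
  exact filter_congr fun x hx => by rw [hconn, h x hx]

theorem EdgeConn.ends_not {S : Finset α} {x : α} (hx : x ∈ S) (c : Bool) :
    EdgeConn ends S (ends x !c) (ends x c) := by
  have h : EdgeConn ends S (ends x false) (ends x true) := .rel _ _ ⟨x, hx, rfl, rfl⟩
  cases c
  exacts [h.symm, h]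

theorem EdgeConn.iff_of_forall_edge {S : Finset α} {p : V → Prop}
    (hp : ∀ x ∈ S, ∀ c, p (ends x c) → p (ends x !c)) {u v : V} (h : EdgeConn ends S u v) :
    p u ↔ p v := by
  induction h with
  | rel u v h =>
    obtain ⟨x, hx, rfl, rfl⟩ := h
    exact ⟨hp x hx false, hp x hx true⟩
  | refl => rfl
  | symm _ _ _ ih => exact ih.symm
  | trans _ _ _ _ _ ih₁ ih₂ => exact ih₁.trans ih₂

variable [DecidableEq α]

theorem EdgeConn.eq_or_exists_erase {S : Finset α} {u v : V} (h : EdgeConn ends S u v) :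
    u = v ∨ ∃ x ∈ S, ∃ c, ends x c = v ∧ EdgeConn ends (S.erase x) u (ends x !c) := by
  -- The right-hand side, as a property of `u`, holds at `v` and is closed under traversing edges.
  refine (h.iff_of_forall_edge (p := fun u => u = v ∨
    ∃ x ∈ S, ∃ c, ends x c = v ∧ EdgeConn ends (S.erase x) u (ends x !c)) ?_).2 (.inl rfl)
  rintro x hx c (hxv | ⟨y, hy, d, rfl, hconn⟩)
  · exact .inr ⟨x, hx, c, hxv, .refl _⟩
  obtain rfl | hxy := eq_or_ne x y
  · obtain rfl | rfl := Bool.eq_or_eq_not c d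
    · exact .inr ⟨x, hx, c, rfl, .refl _⟩
    · exact .inl (by rw [Bool.not_not])
  · exact .inr ⟨y, hy, d, rfl, .trans _ _ _ (EdgeConn.ends_not (mem_erase.2 ⟨hxy, hx⟩) c) hconn⟩

theorem card_componentEdges_le_sum_erase [DecidableEq V] (S : Finset α) (v : V) :
    #(componentEdges ends S v) ≤ ∑ x ∈ S, ∑ c,
      if ends x c = v then 1 + #(componentEdges ends (S.erase x) (ends x !c)) else 0 := by
  have hsub : componentEdges ends S v ⊆ S.biUnion fun x => univ.biUnion fun c =>
      if ends x c = v then insert x (componentEdges ends (S.erase x) (ends x !c)) else ∅ := by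
    intro y hy
    obtain ⟨hyS, hconn⟩ := mem_filter.1 hy
    simp only [mem_biUnion, mem_univ, true_and]
    obtain hyv | ⟨x, hx, c, hxv, hconn⟩ := hconn.eq_or_exists_erase
    · exact ⟨y, hyS, false, by simp [hyv]⟩
    · refine ⟨x, hx, c, ?_⟩
      rw [if_pos hxv, mem_insert, componentEdges, mem_filter, mem_erase]
      tauto
  refine (card_le_card hsub).trans <| card_biUnion_le.trans <| sum_le_sum fun x _ =>
    card_biUnion_le.trans <| sum_le_sum fun c _ => ?_
  split_ifs
  · exact (card_insert_le _ _).trans_eq (add_comm _ _)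
  · exact card_empty.le

end Multigraph

section Independence

open Function
open scoped BigOperators

variable {ι β M : Type*} [Fintype ι] [DecidableEq ι] [Fintype β] [AddCommMonoid M] [Module ℚ≥0 M]

theorem expect_apply_eq_expect_expect (i : ι) {F : β → (ι → β) → M}
    (hF : ∀ t w u, F t (update w i u) = F t w) :
    𝔼 w, F (w i) w = 𝔼 t, 𝔼 w, F t w := by
  cases isEmpty_or_nonempty β
  · have : IsEmpty (ι → β) := ⟨fun w => isEmptyElim (w i)⟩
    simp
  -- Exchanging an extra uniform value with coordinate `i` is an involution.
  let swap : β × (ι → β) → β × (ι → β) := fun p => (p.2 i, update p.2 i p.1)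
  have hswap : Involutive swap := fun p => by simp [swap]
  calc 𝔼 w, F (w i) w = 𝔼 _t : β, 𝔼 w, F (w i) w := (Fintype.expect_const _).symm
    _ = 𝔼 p : β × (ι → β), F (p.2 i) p.2 :=
      (Finset.expect_product _ _ fun p : β × (ι → β) => F (p.2 i) p.2).symm
    _ = 𝔼 p : β × (ι → β), F p.1 p.2 :=
      Fintype.expect_bijective swap hswap.bijective _ _ fun p => (hF _ _ _).symm
    _ = 𝔼 t, 𝔼 w, F t w := Finset.expect_product _ _ fun p : β × (ι → β) => F p.1 p.2

theorem expect_ite_apply_eq {K : Type*} [Semifield K] [CharZero K] [DecidableEq β] (i : ι) (a : β)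
    {f : (ι → β) → K} (hf : ∀ w u, f (update w i u) = f w) :
    𝔼 w, (if w i = a then f w else 0) = (𝔼 w, f w) / Fintype.card β := by
  rw [expect_apply_eq_expect_expect i (F := fun t w => if t = a then f w else 0)
    fun t w u => by rw [hf]]
  have hpull (t : β) : 𝔼 w, (if t = a then f w else 0) = if t = a then 𝔼 w, f w else 0 := by
    split_ifs <;> simp
  simp only [hpull, Fintype.expect_eq_sum_div_card (ι := β), Finset.sum_ite_eq',
    Finset.mem_univ, if_true]

end Independence

section RandomCuckooGraph

open Finset Function
open scoped BigOperators

variable {α β : Type*}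

/-- The ends of the edges of the cuckoo graph of `w`, where `w (false, x)` and `w (true, x)` are the
left and right hash values of `x`. A single function holds both hash functions so that all hash
values are coordinates of one uniform point. -/
def cuckooEnds (w : Bool × α → β) (x : α) (c : Bool) : β ⊕ β :=
  Equiv.boolProdEquivSum β (c, w (c, x))

variable [DecidableEq α]

theorem componentEdges_cuckooEnds_update {S : Finset α} {x : α} (hx : x ∉ S) (w : Bool × α → β)
    (c : Bool) (t : β) (v : β ⊕ β) :
    componentEdges (cuckooEnds (update w (c, x) t)) S v = componentEdges (cuckooEnds w) S v := by
  refine componentEdges_congr (fun y hy => funext fun d => ?_) v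
  have hyx : (d, y) ≠ (c, x) := fun h => hx ((Prod.mk.inj h).2 ▸ hy)
  rw [cuckooEnds, cuckooEnds, update_of_ne hyx]

theorem card_componentEdges_cuckooEnds_le [DecidableEq β] (w : Bool × α → β) (S : Finset α)
    (b : Bool) (a : β) :
    #(componentEdges (cuckooEnds w) S (Equiv.boolProdEquivSum β (b, a))) ≤
      ∑ x ∈ S, if w (b, x) = a then
        1 + #(componentEdges (cuckooEnds w) (S.erase x) (cuckooEnds w x !b)) else 0 := by
  refine (card_componentEdges_le_sum_erase S _).trans_eq (sum_congr rfl fun x _ => ?_)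
  have hends (c : Bool) :
      cuckooEnds w x c = Equiv.boolProdEquivSum β (b, a) ↔ c = b ∧ w (c, x) = a := by
    rw [cuckooEnds, EmbeddingLike.apply_eq_iff_eq, Prod.mk.injEq]
  simp only [hends, ite_and, sum_ite_eq', mem_univ, if_true]

variable [Fintype α] [Fintype β]

variable (β) in
/-- The mean number of edges in the component of `v` in the cuckoo graph restricted to the items in
`S`, over uniformly random hash values in `β`. Hash values of items outside `S` are averaged over
without effect, so that all `S` share one sample space. -/
noncomputable def meanComponentSize (S : Finset α) (v : β ⊕ β) : ℝ :=
  𝔼 w : Bool × α → β, (#(componentEdges (cuckooEnds w) S v) : ℝ)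

theorem expect_ite_card_componentEdges_eq [DecidableEq β] {S : Finset α} {x : α} (hx : x ∉ S)
    (b : Bool) (a : β) :
    𝔼 w : Bool × α → β, (if w (b, x) = a then
        1 + (#(componentEdges (cuckooEnds w) S (cuckooEnds w x !b)) : ℝ) else 0) =
      (1 + 𝔼 t, meanComponentSize β S (Equiv.boolProdEquivSum β (!b, t))) / Fintype.card β := by
  have : Nonempty β := ⟨a⟩
  have hfar (w : Bool × α → β) (u : β) :
      cuckooEnds (update w (b, x) u) x (!b) = cuckooEnds w x !b := by
    rw [cuckooEnds, cuckooEnds, update_of_ne (by simp)]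
  have hmean : 𝔼 w : Bool × α → β, (#(componentEdges (cuckooEnds w) S (cuckooEnds w x !b)) : ℝ) =
      𝔼 t, meanComponentSize β S (Equiv.boolProdEquivSum β (!b, t)) :=
    expect_apply_eq_expect_expect (!b, x)
      (F := fun t w => (#(componentEdges (cuckooEnds w) S (Equiv.boolProdEquivSum β (!b, t))) : ℝ))
      fun t w u => by rw [componentEdges_cuckooEnds_update hx]
  rw [expect_ite_apply_eq (b, x) a fun w u => by rw [componentEdges_cuckooEnds_update hx, hfar],
    expect_add_distrib, Fintype.expect_const, hmean]

theorem meanComponentSize_le_sum_erase (S : Finset α) (b : Bool) (a : β) :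
    meanComponentSize β S (Equiv.boolProdEquivSum β (b, a)) ≤
      ∑ x ∈ S, (1 + 𝔼 t, meanComponentSize β (S.erase x) (Equiv.boolProdEquivSum β (!b, t))) /
        Fintype.card β := by
  classical
  calc meanComponentSize β S (Equiv.boolProdEquivSum β (b, a))
      ≤ 𝔼 w : Bool × α → β, ∑ x ∈ S, (if w (b, x) = a then
        1 + (#(componentEdges (cuckooEnds w) (S.erase x) (cuckooEnds w x !b)) : ℝ) else 0) :=
        expect_le_expect fun w _ => mod_cast card_componentEdges_cuckooEnds_le w S b a
    _ = _ := by
        rw [expect_sum_comm]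
        exact sum_congr rfl fun x _ => expect_ite_card_componentEdges_eq (notMem_erase x S) b a

theorem meanComponentSize_le {q : ℝ} (hq : 0 ≤ q) {S : Finset α}
    (hS : #S * (1 + q) ≤ q * Fintype.card β) (v : β ⊕ β) :
    meanComponentSize β S v ≤ q := by
  induction S using Finset.strongInduction generalizing v with
  | H S ih =>
  obtain ⟨⟨b, a⟩, rfl⟩ := (Equiv.boolProdEquivSum β).surjective v
  have herase (x : α) (hx : x ∈ S) (t : β) :
      meanComponentSize β (S.erase x) (Equiv.boolProdEquivSum β (!b, t)) ≤ q := by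
    refine ih _ (erase_ssubset hx) (le_trans ?_ hS) _
    gcongr
    exact erase_subset x S
  calc meanComponentSize β S (Equiv.boolProdEquivSum β (b, a))
      ≤ ∑ x ∈ S, (1 + 𝔼 t, meanComponentSize β (S.erase x) (Equiv.boolProdEquivSum β (!b, t))) /
        Fintype.card β := meanComponentSize_le_sum_erase S b a
    _ ≤ ∑ _x ∈ S, (1 + q) / Fintype.card β := by
        gcongr with x hx
        exact expect_le ⟨a, mem_univ a⟩ fun t _ => herase x hx t
    _ = #S * (1 + q) / Fintype.card β := by rw [sum_const, nsmul_eq_mul, mul_div_assoc]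
    _ ≤ q := div_le_of_le_mul₀ (by positivity) hq hS

/-- A pair of hash functions, with values read as coordinates: `(false, x)` for the first and
`(true, x)` for the second, as `cuckooEnds` expects. -/
def hashPairEquiv (n m : ℕ) : HashPair n m ≃ (Bool × Fin n → Fin m) :=
  (Equiv.boolArrowEquivProd (Fin n → Fin m)).symm.trans (Equiv.curry Bool (Fin n) (Fin m)).symm

theorem cuckooC_eq_card_componentEdges {n m : ℕ} (ω : HashPair n m) (v : Fin m ⊕ Fin m) :
    cuckooC n m ω.1 ω.2 v = #(componentEdges (cuckooEnds (hashPairEquiv n m ω)) univ v) := by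
  have hconn : cuckooConn n m ω.1 ω.2 = EdgeConn (cuckooEnds (hashPairEquiv n m ω)) univ := by
    simp only [EdgeConn, mem_univ, true_and]
    rfl
  rw [cuckooC, hconn, Nat.card_eq_fintype_card, Fintype.card_subtype]
  rfl

theorem cuckooE_cuckooC_eq_meanComponentSize (n m : ℕ) (v : Fin m ⊕ Fin m) :
    cuckooE n m (fun ω => (cuckooC n m ω.1 ω.2 v : ℝ)) =
      meanComponentSize (Fin m) (univ : Finset (Fin n)) v := by
  rw [cuckooE, Nat.card_eq_fintype_card, ← Fintype.expect_eq_sum_div_card]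
  exact Fintype.expect_equiv (hashPairEquiv n m) _ _ fun ω => by
    rw [cuckooC_eq_card_componentEdges]

end RandomCuckooGraph

/-- If `(1+ε)·n ≤ m` then the expected component size `E[C(v)]` is bounded by a constant
`K` depending only on `ε`, for every vertex `v`. -/
theorem cuckoo_expected_component_size_bounded (ε : ℝ) (hε : 0 < ε) :
    ∃ K : ℝ, ∀ n m : ℕ, 0 < n → 0 < m → (1 + ε) * n ≤ m → ∀ v : Fin m ⊕ Fin m,
      cuckooE n m (fun ω => (cuckooC n m ω.1 ω.2 v : ℝ)) ≤ K := by
  refine ⟨ε⁻¹, fun n m _ _ hnm v => ?_⟩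
  rw [cuckooE_cuckooC_eq_meanComponentSize]
  refine meanComponentSize_le (inv_nonneg.2 hε.le) ?_ v
  rw [Finset.card_univ, Fintype.card_fin, Fintype.card_fin]
  calc (n : ℝ) * (1 + ε⁻¹) = ε⁻¹ * ((1 + ε) * n) := by field_simp; ring
    _ ≤ ε⁻¹ * m := by gcongr
end
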